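/- Let S ⊂ X with S ∩ (−S) = ∅, t = μ(S), f = 1_S − 1_{−S}. Then for any v ∈ ℝ^n, I_p(v,f) ≤ B_p max{(2t)^{1/p}, (2t)^{1/2}} (Σ_{i=1}^n v_i^2)^{1/2}, where B_p = max{1, 2^{1/2−1/p}, 2^{1/2}(Γ((p+1)/2)/√π)^{1/p}} is the optimal upper Khintchine constant. -/

import Mathlib

open MeasureTheory

namespace Khin

/-- The average of `φ` over all signed sums of the coefficients `a`. -/
noncomputable def radAvg (n : ℕ) (a : Fin n → ℝ) (φ : ℝ → ℝ) : ℝ :=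
  (1 / 2 ^ n) * ∑ ε : Fin n → Bool, φ (∑ i, (if ε i then -1 else 1) * a i)

/-- The absolute Gaussian moment of order `p`. -/
noncomputable def gam (p : ℝ) : ℝ := 2 ^ (p / 2) * (Real.Gamma ((p + 1) / 2) / Real.sqrt Real.pi)

lemma radAvg_zero (a : Fin 0 → ℝ) (φ : ℝ → ℝ) : radAvg 0 a φ = φ 0 := by
  simp [radAvg]

lemma radAvg_succ (n : ℕ) (a : Fin (n + 1) → ℝ) (φ : ℝ → ℝ) :
    radAvg (n + 1) a φ = (radAvg n (fun i => a i.succ) (fun x => φ (a 0 + x)) +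
      radAvg n (fun i => a i.succ) (fun x => φ (-a 0 + x))) / 2 := by
  unfold radAvg
  rw [← (Fin.consEquiv (fun _ : Fin (n + 1) => Bool)).sum_comp, Fintype.sum_prod_type]
  simp only [Fin.consEquiv_apply, Fin.sum_univ_succ, Fin.cons_zero, Fin.cons_succ,
    Fintype.sum_bool, if_true, Bool.false_eq_true, if_false, neg_mul, one_mul]
  rw [pow_succ]
  field_simp
  ring

lemma radAvg_add (n : ℕ) (a : Fin n → ℝ) (φ ψ : ℝ → ℝ) :
    radAvg n a (fun x => φ x + ψ x) = radAvg n a φ + radAvg n a ψ := by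
  simp [radAvg, Finset.sum_add_distrib, mul_add]

lemma radAvg_mul (n : ℕ) (a : Fin n → ℝ) (c : ℝ) (φ : ℝ → ℝ) :
    radAvg n a (fun x => c * φ x) = c * radAvg n a φ := by
  simp only [radAvg, ← Finset.mul_sum]; ring

lemma radAvg_const (n : ℕ) (a : Fin n → ℝ) (c : ℝ) : radAvg n a (fun _ => c) = c := by
  simp [radAvg]

lemma radAvg_mono (n : ℕ) (a : Fin n → ℝ) {φ ψ : ℝ → ℝ} (h : ∀ x, φ x ≤ ψ x) :
    radAvg n a φ ≤ radAvg n a ψ := by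
  unfold radAvg
  gcongr
  exact h _

lemma radAvg_scale (n : ℕ) (a : Fin n → ℝ) (c : ℝ) (φ : ℝ → ℝ) :
    radAvg n (fun i => c * a i) φ = radAvg n a (fun x => φ (c * x)) := by
  unfold radAvg
  congr 1
  refine Finset.sum_congr rfl fun ε _ => ?_
  congr 1
  rw [Finset.mul_sum]
  refine Finset.sum_congr rfl fun i _ => ?_
  ring

lemma radAvg_id (n : ℕ) (a : Fin n → ℝ) : radAvg n a (fun x => x) = 0 := by
  induction n with
  | zero => simp [radAvg_zero]
  | succ n ih =>
    rw [radAvg_succ, radAvg_add, radAvg_add, radAvg_const, radAvg_const, ih]; ring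

lemma radAvg_sq (n : ℕ) (a : Fin n → ℝ) : radAvg n a (fun x => x ^ 2) = ∑ i, a i ^ 2 := by
  induction n with
  | zero => simp [radAvg_zero]
  | succ n ih =>
    have h : ∀ c : ℝ, radAvg n (fun i => a i.succ) (fun x => (c + x) ^ 2) =
        c ^ 2 + ∑ i : Fin n, a i.succ ^ 2 := by
      intro c
      have : (fun x : ℝ => (c + x) ^ 2) = fun x => (c ^ 2 + (2 * c) * x) + x ^ 2 := by
        funext x; ring
      rw [this, radAvg_add, radAvg_add, radAvg_mul, radAvg_const, radAvg_id, ih]; ring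
    rw [radAvg_succ, h, h, Fin.sum_univ_succ]; ring

end Khin
namespace Khin
open ProbabilityTheory

lemma integrable_gauss (v : NNReal) (p : ℝ) (hp : 1 ≤ p) (x : ℝ) :
    Integrable (fun y => |x + y| ^ p) (gaussianReal 0 v) := by
  have h : MemLp (fun y : ℝ => x + id y) (ENNReal.ofReal p) (gaussianReal 0 v) :=
    (memLp_const x).add (memLp_id_gaussianReal' _ ENNReal.ofReal_ne_top)
  have := h.integrable_norm_rpow (by simp; linarith) ENNReal.ofReal_ne_top
  rw [ENNReal.toReal_ofReal (by linarith)] at this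
  exact this

lemma gauss_second (v : NNReal) : ∫ y, y ^ 2 ∂(gaussianReal 0 v) = v := by
  have h := variance_eq_sub (X := id) (μ := gaussianReal 0 v)
    (memLp_id_gaussianReal' 2 (by simp))
  rw [variance_id_gaussianReal] at h
  simp at h
  simpa using h.symm

/-- The Gaussian moment. -/
lemma gauss_moment (p : ℝ) (hp : 1 ≤ p) : ∫ y, |y| ^ p ∂(gaussianReal 0 1) = gam p := by
  rw [integral_gaussianReal_eq_integral_smul one_ne_zero]
  have h1 : (fun x : ℝ => gaussianPDFReal 0 1 x • |x| ^ p) =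
      fun x => (fun y : ℝ => (Real.sqrt (2 * Real.pi))⁻¹ * (y ^ p * Real.exp (-(1 / 2) * y ^ (2 : ℝ)))) |x| := by
    funext x
    simp only [gaussianPDFReal, smul_eq_mul, NNReal.coe_one, sub_zero, mul_one]
    rw [show |x| ^ (2 : ℝ) = x ^ 2 by rw [Real.rpow_two, sq_abs]]
    rw [show -x ^ 2 / 2 = -(1 / 2) * x ^ 2 by ring]
    ring
  rw [h1, integral_comp_abs (f := fun y : ℝ => (Real.sqrt (2 * Real.pi))⁻¹ * (y ^ p * Real.exp (-(1 / 2) * y ^ (2 : ℝ)))), integral_const_mul,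
    integral_rpow_mul_exp_neg_mul_rpow (by norm_num) (by linarith) (by norm_num)]
  unfold gam
  rw [show -(p + 1) / 2 = -((p + 1) / 2) by ring, Real.rpow_neg (by norm_num),
    Real.div_rpow (by norm_num) (by norm_num), Real.one_rpow,
    show (p + 1) / 2 = p / 2 + 1 / 2 by ring, Real.rpow_add (by norm_num),
    Real.sqrt_mul (by norm_num), ← Real.sqrt_eq_rpow]
  field_simp

lemma gauss_moment_var (v : NNReal) (p : ℝ) (hp : 1 ≤ p) :
    ∫ y, |y| ^ p ∂(gaussianReal 0 v) = gam p * (v : ℝ) ^ (p / 2) := by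
  have h : gaussianReal 0 v = (gaussianReal 0 1).map (fun y => Real.sqrt v * y) := by
    rw [gaussianReal_map_const_mul]
    congr 1
    · simp
    · ext; simp
  rw [h, integral_map (by fun_prop) (Continuous.aestronglyMeasurable (Continuous.rpow_const (by fun_prop) fun x => Or.inr (by linarith)))]
  simp_rw [abs_mul, Real.mul_rpow (abs_nonneg _) (abs_nonneg _)]
  rw [integral_const_mul, gauss_moment p hp, abs_of_nonneg (Real.sqrt_nonneg _),
    Real.sqrt_eq_rpow, ← Real.rpow_mul v.coe_nonneg, mul_comm]
  congr 2; ring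

lemma hasDerivAt_signed (q : ℝ) (hq : 1 ≤ q) (x : ℝ) :
    HasDerivAt (fun x : ℝ => |x| ^ q * x) ((q + 1) * |x| ^ q) x := by
  rcases eq_or_ne x 0 with rfl | hx
  · rw [hasDerivAt_iff_tendsto_slope]
    have : Filter.Tendsto (fun y : ℝ => |y| ^ q) (nhdsWithin 0 {0}ᶜ) (nhds ((q + 1) * |0| ^ q)) := by
      have hc : Continuous fun y : ℝ => |y| ^ q :=
        Continuous.rpow_const continuous_abs fun x => Or.inr (by linarith)
      have := hc.tendsto 0
      rw [abs_zero, Real.zero_rpow (by linarith)] at this ⊢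
      rw [mul_zero]
      exact this.mono_left nhdsWithin_le_nhds
    refine this.congr' ?_
    filter_upwards [self_mem_nhdsWithin] with y hy
    have hy' : y ≠ 0 := hy
    simp [slope_def_field, hy']
  · have ha : |x| ≠ 0 := abs_ne_zero.2 hx
    have h1 : HasDerivAt (fun x : ℝ => |x|) (SignType.sign x : ℝ) x := hasDerivAt_abs hx
    have h2 := (h1.rpow_const (p := q) (Or.inl ha)).mul (hasDerivAt_id x)
    convert! h2 using 1
    simp only [id]
    have : (SignType.sign x : ℝ) * x = |x| := sign_mul_self x
    have e : |x| ^ q = |x| ^ (q - 1) * |x| := by rw [← Real.rpow_add_one ha]; ring_nf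
    rw [show (SignType.sign x : ℝ) * q * |x| ^ (q - 1) * x =
      q * |x| ^ (q - 1) * ((SignType.sign x : ℝ) * x) by ring, this, e]
    ring

lemma convexN (p : ℝ) (hp : 3 ≤ p) (y : ℝ) :
    ConvexOn ℝ (Set.Ici 0)
      (fun r => |y + r| ^ (p - 2) * (y + r) - |y - r| ^ (p - 2) * (y - r)) := by
  have hd : ∀ r : ℝ, HasDerivAt
      (fun r => |y + r| ^ (p - 2) * (y + r) - |y - r| ^ (p - 2) * (y - r))
      ((p - 1) * (|y + r| ^ (p - 2) + |y - r| ^ (p - 2))) r := by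
    intro r
    have h1 := (hasDerivAt_signed (p - 2) (by linarith) (y + r)).comp r
      ((hasDerivAt_id r).const_add y)
    have h2 := (hasDerivAt_signed (p - 2) (by linarith) (y - r)).comp r
      ((hasDerivAt_id r).const_sub y)
    convert! h1.sub h2 using 1
    ring
  have hcv : ConvexOn ℝ Set.univ (fun x : ℝ => |x| ^ (p - 2)) := by
    have h1 : ConvexOn ℝ (Set.Ici 0) (fun x : ℝ => x ^ (p - 2)) := convexOn_rpow (by linarith)
    refine ⟨convex_univ, fun a _ b _ s t hs ht hst => ?_⟩
    have h2 := h1.2 (abs_nonneg a) (abs_nonneg b) hs ht hst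
    simp only [smul_eq_mul] at h2 ⊢
    refine le_trans ?_ h2
    refine Real.rpow_le_rpow (abs_nonneg _) ?_ (by linarith)
    refine (abs_add_le _ _).trans ?_
    rw [abs_mul, abs_mul, abs_of_nonneg hs, abs_of_nonneg ht]
  have hev : ConvexOn ℝ Set.univ (fun r : ℝ => |y + r| ^ (p - 2) + |y - r| ^ (p - 2)) := by
    refine ⟨convex_univ, fun a _ b _ s t hs ht hst => ?_⟩
    have e1 := hcv.2 (Set.mem_univ (y + a)) (Set.mem_univ (y + b)) hs ht hst
    have e2 := hcv.2 (Set.mem_univ (y - a)) (Set.mem_univ (y - b)) hs ht hst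
    simp only [smul_eq_mul] at e1 e2 ⊢
    have f1 : s * (y + a) + t * (y + b) = y + (s * a + t * b) := by linear_combination y * hst
    have f2 : s * (y - a) + t * (y - b) = y - (s * a + t * b) := by linear_combination y * hst
    rw [f1] at e1
    rw [f2] at e2
    linarith
  have hmono : MonotoneOn (fun r : ℝ => |y + r| ^ (p - 2) + |y - r| ^ (p - 2)) (Set.Ici 0) := by
    intro r hr r' hr' hrr
    have hr0 : (0 : ℝ) ≤ r := hr
    rcases hr0.eq_or_lt with h | h
    · subst h
      have := hev.2 (Set.mem_univ r') (Set.mem_univ (-r')) 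
        (show (0 : ℝ) ≤ 1 / 2 by norm_num) (show (0 : ℝ) ≤ 1 / 2 by norm_num) (by norm_num)
      simp only [smul_eq_mul] at this
      rw [show (1 / 2 : ℝ) * r' + 1 / 2 * -r' = 0 by ring, ← sub_eq_add_neg, sub_neg_eq_add] at this
      linarith
    · have hr'0 : 0 < r' := by linarith
      have := hev.2 (Set.mem_univ r') (Set.mem_univ (-r')) 
        (show 0 ≤ (r' + r) / (2 * r') by positivity)
        (show 0 ≤ (r' - r) / (2 * r') from div_nonneg (by linarith) (by linarith)) (by field_simp; ring)
      simp only [smul_eq_mul] at this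
      rw [show (r' + r) / (2 * r') * r' + (r' - r) / (2 * r') * -r' = r by field_simp; ring,
        ← sub_eq_add_neg, sub_neg_eq_add] at this
      have e : (r' + r) / (2 * r') + (r' - r) / (2 * r') = 1 := by field_simp; ring
      simp only
      calc _ ≤ _ := this
        _ = ((r' + r) / (2 * r') + (r' - r) / (2 * r')) *
          (|y + r'| ^ (p - 2) + |y - r'| ^ (p - 2)) := by ring
        _ = _ := by rw [e]; ring
  refine MonotoneOn.convexOn_of_deriv (convex_Ici 0)
    (fun r _ => (hd r).continuousAt.continuousWithinAt)
    (fun r _ => (hd r).differentiableAt.differentiableWithinAt) ?_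
  intro r hr r' hr' hrr
  rw [interior_Ici] at hr hr'
  rw [(hd r).deriv, (hd r').deriv]
  have := hmono (Set.mem_Ici.2 (le_of_lt hr)) (Set.mem_Ici.2 (le_of_lt hr')) hrr
  simp only at this
  have hp1 : 0 ≤ p - 1 := by linarith
  gcongr

lemma convexPsi (p : ℝ) (hp : 3 ≤ p) (y : ℝ) :
    ConvexOn ℝ (Set.Ici 0)
      (fun u => |y + Real.sqrt u| ^ p + |y - Real.sqrt u| ^ p) := by
  have hd : ∀ u : ℝ, 0 < u → HasDerivAt
      (fun u => |y + Real.sqrt u| ^ p + |y - Real.sqrt u| ^ p)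
      (p / 2 * ((|y + Real.sqrt u| ^ (p - 2) * (y + Real.sqrt u) -
        |y - Real.sqrt u| ^ (p - 2) * (y - Real.sqrt u)) / Real.sqrt u)) u := by
    intro u hu
    have hs := Real.hasDerivAt_sqrt hu.ne'
    have h1 := (hasDerivAt_abs_rpow (y + Real.sqrt u) (p := p) (by linarith)).comp u
      (hs.const_add y)
    have h2 := (hasDerivAt_abs_rpow (y - Real.sqrt u) (p := p) (by linarith)).comp u
      (hs.const_sub y)
    convert! h1.add h2 using 1
    have : 0 < Real.sqrt u := Real.sqrt_pos.2 hu
    field_simp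
    ring
  have hc : Continuous (fun u => |y + Real.sqrt u| ^ p + |y - Real.sqrt u| ^ p) := by
    refine Continuous.add ?_ ?_
    · exact Continuous.rpow_const (by fun_prop) fun x => Or.inr (by linarith)
    · exact Continuous.rpow_const (by fun_prop) fun x => Or.inr (by linarith)
  refine MonotoneOn.convexOn_of_deriv (convex_Ici 0) hc.continuousOn
    (fun r hr => (hd r (by rwa [interior_Ici] at hr)).differentiableAt.differentiableWithinAt) ?_
  intro u hu u' hu' huu
  rw [interior_Ici] at hu hu'
  rw [(hd u hu).deriv, (hd u' hu').deriv]
  have hp1 : 0 ≤ p / 2 := by linarith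
  refine mul_le_mul_of_nonneg_left ?_ hp1
  rcases eq_or_lt_of_le huu with rfl | hlt
  · exact le_rfl
  have hs0 : 0 < Real.sqrt u := Real.sqrt_pos.2 hu
  have hs1 : Real.sqrt u < Real.sqrt u' := Real.sqrt_lt_sqrt (le_of_lt hu) hlt
  have := (convexN p hp y).secant_mono (a := 0) (x := Real.sqrt u) (y := Real.sqrt u')
    (Set.mem_Ici.2 le_rfl) (Set.mem_Ici.2 hs0.le) (Set.mem_Ici.2 (hs0.trans hs1).le)
    hs0.ne' (hs0.trans hs1).ne' hs1.le
  simpa using this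

lemma one_step (p : ℝ) (hp : 3 ≤ p) (y a : ℝ) (v : NNReal) (hv : (v : ℝ) = a ^ 2) :
    (|y + a| ^ p + |y - a| ^ p) / 2 ≤ ∫ h, |y + h| ^ p ∂(gaussianReal 0 v) := by
  have hi1 := integrable_gauss v p (by linarith) y
  have hneg : (gaussianReal 0 v).map (fun x => -x) = gaussianReal 0 v := by
    rw [gaussianReal_map_neg, neg_zero]
  have hi2 : Integrable (fun h => |y - h| ^ p) (gaussianReal 0 v) := by
    have := integrable_gauss v p (by linarith) (-y)
    refine this.congr (Filter.Eventually.of_forall fun h => ?_)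
    simp only
    rw [← abs_neg]; congr 2; ring
  have hsym : ∫ h, |y - h| ^ p ∂(gaussianReal 0 v) = ∫ h, |y + h| ^ p ∂(gaussianReal 0 v) := by
    conv_rhs => rw [← hneg]
    rw [integral_map (by fun_prop) (Continuous.aestronglyMeasurable (Continuous.rpow_const (by fun_prop) fun x => Or.inr (by linarith)))]
    simp [sub_eq_add_neg]
  have hpt : ∀ h : ℝ, |y + Real.sqrt (h ^ 2)| ^ p + |y - Real.sqrt (h ^ 2)| ^ p =
      |y + h| ^ p + |y - h| ^ p := by
    intro h
    rw [Real.sqrt_sq_eq_abs]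
    rcases abs_choice h with e | e <;> rw [e]
    rw [sub_neg_eq_add, ← sub_eq_add_neg, add_comm]
  have hc : Continuous (fun u => |y + Real.sqrt u| ^ p + |y - Real.sqrt u| ^ p) := by
    refine Continuous.add ?_ ?_
    · exact Continuous.rpow_const (by fun_prop) fun x => Or.inr (by linarith)
    · exact Continuous.rpow_const (by fun_prop) fun x => Or.inr (by linarith)
  have hJ := (convexPsi p hp y).map_integral_le (μ := gaussianReal 0 v) (f := fun h => h ^ 2)
    hc.continuousOn isClosed_Ici (Filter.Eventually.of_forall fun x => Set.mem_Ici.2 (sq_nonneg _))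
    ?_ ?_
  · rw [gauss_second, hv] at hJ
    simp only [hpt] at hJ
    rw [integral_add hi1 hi2, hsym] at hJ
    linarith
  · exact (memLp_id_gaussianReal' 2 (by simp)).integrable_sq
  · refine (hi1.add hi2).congr (Filter.Eventually.of_forall fun h => ?_)
    simp only [Function.comp, hpt, Pi.add_apply]

lemma khin_shift (p : ℝ) (hp : 3 ≤ p) (n : ℕ) : ∀ (a : Fin n → ℝ) (x : ℝ) (v : NNReal),
    (v : ℝ) = ∑ i, a i ^ 2 →
    radAvg n a (fun s => |x + s| ^ p) ≤ ∫ h, |x + h| ^ p ∂(gaussianReal 0 v) := by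
  induction n with
  | zero =>
    intro a x v hv
    have : v = 0 := by ext; simpa using hv
    subst this
    simp [radAvg_zero]
  | succ n ih =>
    intro a x v hv
    rw [Fin.sum_univ_succ] at hv
    let v0 : NNReal := ⟨a 0 ^ 2, sq_nonneg _⟩
    let w : NNReal := ⟨∑ i : Fin n, a i.succ ^ 2, Finset.sum_nonneg fun i _ => sq_nonneg _⟩
    have hvw : v = w + v0 := NNReal.coe_injective (by rw [hv, add_comm]; rfl)
    rw [radAvg_succ]
    have i1 := ih (fun i => a i.succ) (x + a 0) w rfl
    have i2 := ih (fun i => a i.succ) (x - a 0) w rfl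
    have e1 : (fun s => |x + (a 0 + s)| ^ p) = fun s => |x + a 0 + s| ^ p := by
      funext s; ring_nf
    have e2 : (fun s => |x + (-a 0 + s)| ^ p) = fun s => |x - a 0 + s| ^ p := by
      funext s; ring_nf
    rw [e1, e2]
    have hintg := integrable_gauss v p (by linarith) x
    rw [hvw, show (0 : ℝ) = 0 + 0 by ring, ← gaussianReal_conv_gaussianReal] at hintg ⊢
    have hintg2 := hintg
    rw [Measure.conv, integrable_map_measure hintg.aestronglyMeasurable (by fun_prop)] at hintg2
    simp only [Function.comp_def] at hintg2
    rw [Measure.conv, integral_map (by fun_prop) hintg.aestronglyMeasurable, integral_prod _ hintg2]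
    have j1 := integrable_gauss w p (by linarith) (x + a 0)
    have j2 := integrable_gauss w p (by linarith) (x - a 0)
    have key : (∫ h, |x + a 0 + h| ^ p ∂(gaussianReal 0 w) +
        ∫ h, |x - a 0 + h| ^ p ∂(gaussianReal 0 w)) / 2 ≤
        ∫ h, ∫ k, |x + (h + k)| ^ p ∂(gaussianReal 0 v0) ∂(gaussianReal 0 w) := by
      rw [← integral_add j1 j2, ← integral_div]
      refine integral_mono ((j1.add j2).div_const 2) hintg2.integral_prod_left fun h => ?_
      have := one_step p hp (x + h) (a 0) v0 rfl
      simp only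
      convert! this using 1
      · ring_nf
      · congr 1; funext k; ring_nf
    linarith

lemma khin_ge3 (p : ℝ) (hp : 3 ≤ p) (n : ℕ) (a : Fin n → ℝ) :
    radAvg n a (fun x => |x| ^ p) ≤ gam p * (∑ i, a i ^ 2) ^ (p / 2) := by
  have hnn : 0 ≤ ∑ i, a i ^ 2 := Finset.sum_nonneg fun i _ => sq_nonneg _
  have h := khin_shift p hp n a 0 (Real.toNNReal (∑ i, a i ^ 2)) (Real.coe_toNNReal _ hnn)
  simp only [zero_add] at h
  rw [gauss_moment_var _ p (by linarith), Real.coe_toNNReal _ hnn] at h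
  exact h
end Khin
namespace Khin

lemma radAvg_cube (n : ℕ) (a : Fin n → ℝ) : radAvg n a (fun x => x ^ 3) = 0 := by
  induction n with
  | zero => simp [radAvg_zero]
  | succ n ih =>
    have h : ∀ c : ℝ, radAvg n (fun i => a i.succ) (fun x => (c + x) ^ 3) =
        c ^ 3 + 3 * c * ∑ i : Fin n, a i.succ ^ 2 := by
      intro c
      have : (fun x : ℝ => (c + x) ^ 3) = fun x => ((c ^ 3 + (3 * c ^ 2) * x) + (3 * c) * x ^ 2) + x ^ 3 := by
        funext x; ring
      rw [this, radAvg_add, radAvg_add, radAvg_add, radAvg_mul, radAvg_mul, radAvg_const, radAvg_id,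
        radAvg_sq, ih]; ring
    rw [radAvg_succ, h, h]; ring

lemma radAvg_four (n : ℕ) (a : Fin n → ℝ) : radAvg n a (fun x => x ^ 4) =
    3 * (∑ i, a i ^ 2) ^ 2 - 2 * ∑ i, a i ^ 4 := by
  induction n with
  | zero => simp [radAvg_zero]
  | succ n ih =>
    have h : ∀ c : ℝ, radAvg n (fun i => a i.succ) (fun x => (c + x) ^ 4) =
        c ^ 4 + 6 * c ^ 2 * ∑ i : Fin n, a i.succ ^ 2 +
          (3 * (∑ i : Fin n, a i.succ ^ 2) ^ 2 - 2 * ∑ i : Fin n, a i.succ ^ 4) := by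
      intro c
      have : (fun x : ℝ => (c + x) ^ 4) = fun x => (((c ^ 4 + (4 * c ^ 3) * x) +
          (6 * c ^ 2) * x ^ 2) + (4 * c) * x ^ 3) + x ^ 4 := by
        funext x; ring
      rw [this, radAvg_add, radAvg_add, radAvg_add, radAvg_add, radAvg_mul, radAvg_mul, radAvg_mul,
        radAvg_const, radAvg_id, radAvg_sq, radAvg_cube, ih]; ring
    rw [radAvg_succ, h, h, Fin.sum_univ_succ, Fin.sum_univ_succ]; ring

lemma gamma_const : Real.eulerMascheroniConstant < 0.5855 := by
  refine (Real.eulerMascheroniConstant_lt_eulerMascheroniSeq' 64).trans ?_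
  have h2 := Real.log_two_gt_d9
  rw [Real.eulerMascheroniSeq', if_neg (by norm_num)]
  have : Real.log ((64 : ℕ) : ℝ) = 6 * Real.log 2 := by
    rw [show ((64 : ℕ) : ℝ) = 2 ^ 6 by norm_num, Real.log_pow]; norm_num
  rw [this]
  have h3 : ((harmonic 64 : ℚ) : ℝ) ≤ 4.744 := by
    have : harmonic 64 ≤ 4.744 := by
      simp only [harmonic, Finset.sum_range_succ, Finset.sum_range_zero]
      norm_num
    have h := (Rat.cast_le (K := ℝ)).2 this
    refine h.trans ?_
    norm_num
  linarith

lemma Gamma_lower (q : ℝ) (hq : 0 < q) :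
    Real.sqrt Real.pi / 2 * (1 + 0.018 * q) ≤ Real.Gamma (3 / 2 + q) := by
  have hd : HasDerivAt Real.Gamma (Real.sqrt Real.pi *
      (1 - Real.eulerMascheroniConstant / 2 - Real.log 2)) (3 / 2) := by
    have h1 := Real.hasDerivAt_Gamma_one_half
    have h2 := (hasDerivAt_id (1 / 2 : ℝ)).mul h1
    have h3 : HasDerivAt (fun s : ℝ => Real.Gamma (s + 1)) (Real.sqrt Real.pi *
      (1 - Real.eulerMascheroniConstant / 2 - Real.log 2)) (1 / 2) := by
      refine HasDerivAt.congr_of_eventuallyEq (f := fun s => s * Real.Gamma s) ?_ ?_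
      · convert! h2 using 1
        simp only [id]
        rw [Real.Gamma_one_half_eq]; ring
      · filter_upwards [lt_mem_nhds (show (0 : ℝ) < 1 / 2 by norm_num)] with s hs
        exact Real.Gamma_add_one hs.ne'
    have h4 : HasDerivAt (fun s : ℝ => s - 1) 1 (3 / 2) := (hasDerivAt_id _).sub_const 1
    have h5 := HasDerivAt.comp (h₂ := fun s : ℝ => Real.Gamma (s + 1)) (3 / 2 : ℝ) (by
      convert! h3 using 1; norm_num) h4
    convert! h5 using 1
    · funext s; simp
    · ring
  have hs := Real.convexOn_Gamma.le_slope_of_hasDerivAt (Set.mem_Ioi.2 (by norm_num))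
    (Set.mem_Ioi.2 (by linarith)) (show (3 / 2 : ℝ) < 3 / 2 + q by linarith) hd
  rw [slope_def_field, le_div_iff₀ (by linarith)] at hs
  have hg : Real.Gamma (3 / 2) = Real.sqrt Real.pi / 2 := by
    rw [show (3 / 2 : ℝ) = 1 / 2 + 1 by norm_num, Real.Gamma_add_one (by norm_num),
      Real.Gamma_one_half_eq]; ring
  rw [hg] at hs
  have h6 := gamma_const
  have h7 := Real.log_two_lt_d9
  have h8 : 0 < Real.sqrt Real.pi := Real.sqrt_pos.2 Real.pi_pos
  have h9 : Real.sqrt Real.pi * 0.009 * q ≤ Real.sqrt Real.pi *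
      (1 - Real.eulerMascheroniConstant / 2 - Real.log 2) * q := by
    gcongr; linarith
  linarith

lemma khin_caseA (p : ℝ) (hp : 2 < p) (hp4 : p ≤ 4) (n : ℕ) (a : Fin n → ℝ)
    (h2 : ∑ i, a i ^ 2 = 1) (h4 : (25 / 36 : ℝ) ^ 2 ≤ ∑ i, a i ^ 4) :
    radAvg n a (fun x => |x| ^ p) ≤ gam p := by
  obtain ⟨q, rfl⟩ : ∃ q, p = 2 * q + 2 := ⟨(p - 2) / 2, by ring⟩
  have hq0 : 0 < q := by linarith
  have hq1 : q ≤ 1 := by linarith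
  have hpt : ∀ x : ℝ, |x| ^ (2 * q + 2) ≤
      (2.036 : ℝ) ^ q * ((1 - q) * x ^ 2 + q / 2.036 * x ^ 4) := by
    intro x
    have e : |x| ^ (2 * q + 2) = (x ^ 2) ^ q * x ^ 2 := by
      rcases eq_or_ne x 0 with rfl | hx
      · simp; rw [Real.zero_rpow (by linarith)]
      · rw [Real.rpow_add (abs_pos.2 hx), Real.rpow_mul (abs_nonneg x), Real.rpow_two, sq_abs]
    have hb := rpow_one_add_le_one_add_mul_self (s := x ^ 2 / 2.036 - 1)
      (by have : 0 ≤ x ^ 2 / 2.036 := by positivity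
          linarith) hq0.le hq1
    rw [add_sub_cancel, Real.div_rpow (sq_nonneg x) (by norm_num), div_le_iff₀ (by positivity)] at hb
    rw [e]
    calc _ ≤ _ := mul_le_mul_of_nonneg_right hb (sq_nonneg x)
      _ = _ := by ring
  have h := radAvg_mono n a hpt
  rw [radAvg_mul, radAvg_add, radAvg_mul, radAvg_mul, radAvg_sq, radAvg_four, h2] at h
  refine h.trans ?_
  have h5 : (1 - q) * 1 + q / 2.036 * (3 * 1 ^ 2 - 2 * ∑ i, a i ^ 4) ≤ 1 := by
    have : q / 2.036 * (3 * 1 ^ 2 - 2 * ∑ i, a i ^ 4) ≤ q / 2.036 * 2.036 := by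
      gcongr; norm_num at h4 ⊢; linarith
    have e : q / 2.036 * 2.036 = q := by field_simp
    linarith
  calc _ ≤ (2.036 : ℝ) ^ q * 1 := by gcongr
    _ = 2 ^ q * (1 + 0.018) ^ q := by
        rw [mul_one, ← Real.mul_rpow (by norm_num) (by norm_num)]; norm_num
    _ ≤ 2 ^ q * (1 + q * 0.018) := by
        gcongr
        exact rpow_one_add_le_one_add_mul_self (by norm_num) hq0.le hq1
    _ ≤ gam (2 * q + 2) := by
        unfold gam
        have hG := Gamma_lower q hq0
        have h8 : 0 < Real.sqrt Real.pi := Real.sqrt_pos.2 Real.pi_pos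
        rw [show (2 * q + 2) / 2 = q + 1 by ring, show (2 * q + 2 + 1) / 2 = 3 / 2 + q by ring,
          Real.rpow_add_one (by norm_num), mul_assoc]
        gcongr
        rw [mul_div_assoc', le_div_iff₀ h8]
        linarith

end Khin
namespace Khin

lemma nonneg_of_deriv (F F' : ℝ → ℝ) (hF : ∀ x, HasDerivAt F (F' x) x) (h0 : F 0 = 0)
    (h : ∀ x, 0 ≤ x → 0 ≤ F' x) (x : ℝ) (hx : 0 ≤ x) : 0 ≤ F x := by
  have hm : MonotoneOn F (Set.Ici 0) :=
    monotoneOn_of_hasDerivWithinAt_nonneg (convex_Ici 0)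
      (fun y _ => (hF y).continuousAt.continuousWithinAt)
      (fun y _ => (hF y).hasDerivWithinAt)
      (fun y hy => h y (by rw [interior_Ici] at hy; exact le_of_lt hy))
  have := hm (Set.mem_Ici.2 le_rfl) (Set.mem_Ici.2 hx) hx
  rwa [h0] at this

lemma tc2 (x : ℝ) (hx : 0 ≤ x) : 0 ≤ Real.cos x - (1 - x ^ 2 / 2) := by
  refine nonneg_of_deriv (fun x => Real.cos x - (1 - x ^ 2 / 2)) (fun x => x - Real.sin x)
    (fun x => ?_) (by simp) (fun x hx => sub_nonneg.2 (Real.sin_le hx)) x hx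
  have := (Real.hasDerivAt_cos x).sub (((hasDerivAt_pow 2 x).div_const 2).const_sub 1)
  convert! this using 1; norm_num; ring

lemma ts3 (x : ℝ) (hx : 0 ≤ x) : 0 ≤ Real.sin x - (x - x ^ 3 / 6) := by
  refine nonneg_of_deriv (fun x => Real.sin x - (x - x ^ 3 / 6)) _
    (fun x => ?_) (by simp) tc2 x hx
  have := (Real.hasDerivAt_sin x).sub ((hasDerivAt_id x).sub ((hasDerivAt_pow 3 x).div_const 6))
  convert! this using 1; norm_num; ring

lemma tc4 (x : ℝ) (hx : 0 ≤ x) : 0 ≤ 1 - x ^ 2 / 2 + x ^ 4 / 24 - Real.cos x := by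
  refine nonneg_of_deriv (fun x => 1 - x ^ 2 / 2 + x ^ 4 / 24 - Real.cos x) _
    (fun x => ?_) (by simp) ts3 x hx
  have := ((((hasDerivAt_pow 2 x).div_const 2).const_sub 1).add
    ((hasDerivAt_pow 4 x).div_const 24)).sub (Real.hasDerivAt_cos x)
  convert! this using 1; norm_num; ring

lemma ts5 (x : ℝ) (hx : 0 ≤ x) : 0 ≤ x - x ^ 3 / 6 + x ^ 5 / 120 - Real.sin x := by
  refine nonneg_of_deriv (fun x => x - x ^ 3 / 6 + x ^ 5 / 120 - Real.sin x) _
    (fun x => ?_) (by simp) tc4 x hx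
  have := (((hasDerivAt_id x).sub ((hasDerivAt_pow 3 x).div_const 6)).add
    ((hasDerivAt_pow 5 x).div_const 120)).sub (Real.hasDerivAt_sin x)
  convert! this using 1; norm_num; ring

lemma tc6 (x : ℝ) (hx : 0 ≤ x) :
    0 ≤ Real.cos x - (1 - x ^ 2 / 2 + x ^ 4 / 24 - x ^ 6 / 720) := by
  refine nonneg_of_deriv (fun x => Real.cos x - (1 - x ^ 2 / 2 + x ^ 4 / 24 - x ^ 6 / 720)) _
    (fun x => ?_) (by simp) ts5 x hx
  have := (Real.hasDerivAt_cos x).sub (((((hasDerivAt_pow 2 x).div_const 2).const_sub 1).add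
    ((hasDerivAt_pow 4 x).div_const 24)).sub ((hasDerivAt_pow 6 x).div_const 720))
  convert! this using 1; norm_num; ring

lemma ts7 (x : ℝ) (hx : 0 ≤ x) :
    0 ≤ Real.sin x - (x - x ^ 3 / 6 + x ^ 5 / 120 - x ^ 7 / 5040) := by
  refine nonneg_of_deriv (fun x => Real.sin x - (x - x ^ 3 / 6 + x ^ 5 / 120 - x ^ 7 / 5040)) _
    (fun x => ?_) (by simp) tc6 x hx
  have := (Real.hasDerivAt_sin x).sub ((((hasDerivAt_id x).sub ((hasDerivAt_pow 3 x).div_const 6)).add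
    ((hasDerivAt_pow 5 x).div_const 120)).sub ((hasDerivAt_pow 7 x).div_const 5040))
  convert! this using 1; norm_num; ring

lemma tc8 (x : ℝ) (hx : 0 ≤ x) :
    0 ≤ 1 - x ^ 2 / 2 + x ^ 4 / 24 - x ^ 6 / 720 + x ^ 8 / 40320 - Real.cos x := by
  refine nonneg_of_deriv
    (fun x => 1 - x ^ 2 / 2 + x ^ 4 / 24 - x ^ 6 / 720 + x ^ 8 / 40320 - Real.cos x) _
    (fun x => ?_) (by simp) ts7 x hx
  have := ((((((hasDerivAt_pow 2 x).div_const 2).const_sub 1).add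
    ((hasDerivAt_pow 4 x).div_const 24)).sub ((hasDerivAt_pow 6 x).div_const 720)).add
    ((hasDerivAt_pow 8 x).div_const 40320)).sub (Real.hasDerivAt_cos x)
  convert! this using 1; norm_num; ring

/-- Denominator in the comparison map. -/
noncomputable def den (x : ℝ) : ℝ := 1 - x ^ 2 / 6 - x ^ 4 / 60 - 3 / 1000 * x ^ 6

lemma den_pos (x : ℝ) (hx0 : 0 ≤ x) (hx : x ≤ Real.pi / 2) : 0.43 ≤ den x := by
  have hp := Real.pi_lt_d2
  have hx2 : x ≤ 1.575 := by linarith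
  have h2 : x ^ 2 ≤ 1.575 ^ 2 := by gcongr
  have h4 : x ^ 4 ≤ 1.575 ^ 4 := by gcongr
  have h6 : x ^ 6 ≤ 1.575 ^ 6 := by gcongr
  unfold den
  norm_num at *
  linarith

lemma tan_ineq (a : ℝ) (ha0 : 0 ≤ a) (ha : a ≤ Real.pi / 2) :
    a * Real.cos a * (1 + a ^ 4 / 60 + 6 / 1000 * a ^ 6) ≤ Real.sin a * den a ^ 2 := by
  have hs := ts7 a ha0
  have hc := tc8 a ha0
  have hp := Real.pi_lt_d2
  have hX : a ^ 2 ≤ 5 / 2 := by nlinarith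
  have hX0 : 0 ≤ a ^ 2 := sq_nonneg a
  have h1 : a * Real.cos a * (1 + a ^ 4 / 60 + 6 / 1000 * a ^ 6) ≤
      a * (1 - a ^ 2 / 2 + a ^ 4 / 24 - a ^ 6 / 720 + a ^ 8 / 40320) *
        (1 + a ^ 4 / 60 + 6 / 1000 * a ^ 6) := by
    gcongr; linarith
  have h2 : (a - a ^ 3 / 6 + a ^ 5 / 120 - a ^ 7 / 5040) * den a ^ 2 ≤ Real.sin a * den a ^ 2 := by
    gcongr; linarith
  refine h1.trans (le_trans ?_ h2)
  rw [← sub_nonneg]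
  have key : 0 ≤ (29/23625 : ℝ) + 2209/604800 * a ^ 2 - 3883/11340000 * (a^2)^2
      + 49849/4536000000 * (a^2)^3 - 4849/4536000000 * (a^2)^4 + 139/2520000000 * (a^2)^5
      - 1/560000000 * (a^2)^6 := by
    generalize a ^ 2 = X at *
    have e2 : X ^ 2 ≤ 5 / 2 * X := by nlinarith
    have e4 : X ^ 4 ≤ 5 / 2 * X ^ 3 := by
      have : 0 ≤ X ^ 3 := by positivity
      nlinarith
    have e6 : X ^ 6 ≤ 5 / 2 * X ^ 5 := by
      have : 0 ≤ X ^ 5 := by positivity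
      nlinarith
    have : 0 ≤ X ^ 3 := by positivity
    have : 0 ≤ X ^ 5 := by positivity
    linarith
  have e : (a - a ^ 3 / 6 + a ^ 5 / 120 - a ^ 7 / 5040) * den a ^ 2 -
      a * (1 - a ^ 2 / 2 + a ^ 4 / 24 - a ^ 6 / 720 + a ^ 8 / 40320) *
        (1 + a ^ 4 / 60 + 6 / 1000 * a ^ 6) = a ^ 7 * ((29/23625 : ℝ) + 2209/604800 * a ^ 2 - 3883/11340000 * (a^2)^2
      + 49849/4536000000 * (a^2)^3 - 4849/4536000000 * (a^2)^4 + 139/2520000000 * (a^2)^5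
      - 1/560000000 * (a^2)^6) := by unfold den; ring
  rw [e]; positivity

lemma hasDerivAt_den (x : ℝ) :
    HasDerivAt den (-(x / 3) - x ^ 3 / 15 - 18 / 1000 * x ^ 5) x := by
  have := ((((hasDerivAt_pow 2 x).div_const 6).const_sub 1).sub
    ((hasDerivAt_pow 4 x).div_const 60)).sub ((hasDerivAt_pow 6 x).const_mul (3 / 1000))
  convert! this using 1; norm_num; ring

/-- Key comparison: `cos a ≤ exp (-b²/2)` with `b² = a² / den a`. -/
lemma cos_le_exp (a : ℝ) (ha0 : 0 ≤ a) (ha : a ≤ Real.pi / 2) :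
    Real.cos a ≤ Real.exp (-(a ^ 2 / den a) / 2) := by
  rcases ha.eq_or_lt with h | hlt
  · rw [h, Real.cos_pi_div_two]; exact (Real.exp_pos _).le
  have hd : ∀ x ∈ Set.Ico 0 (Real.pi / 2), HasDerivAt
      (fun x => -Real.log (Real.cos x) - x ^ 2 / den x / 2)
      (Real.sin x / Real.cos x - x * (1 + x ^ 4 / 60 + 6 / 1000 * x ^ 6) / den x ^ 2) x := by
    intro x hx
    have hc : 0 < Real.cos x := Real.cos_pos_of_mem_Ioo ⟨by linarith [hx.1, Real.pi_pos], hx.2⟩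
    have hdp := den_pos x hx.1 hx.2.le
    have hdp' : den x ≠ 0 := by intro h; rw [h] at hdp; norm_num at hdp
    have := ((Real.hasDerivAt_cos x).log hc.ne').neg.sub
      (((hasDerivAt_pow 2 x).div (hasDerivAt_den x) hdp').div_const 2)
    convert! this using 1
    field_simp
    unfold den
    push_cast
    ring
  have hm : MonotoneOn (fun x => -Real.log (Real.cos x) - x ^ 2 / den x / 2)
      (Set.Ico 0 (Real.pi / 2)) := by
    refine monotoneOn_of_hasDerivWithinAt_nonneg (convex_Ico _ _)
      (fun y hy => (hd y hy).continuousAt.continuousWithinAt)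
      (fun y hy => (hd y (interior_subset hy)).hasDerivWithinAt) fun y hy => ?_
    have hx := interior_subset hy
    have hc : 0 < Real.cos y := Real.cos_pos_of_mem_Ioo ⟨by linarith [hx.1, Real.pi_pos], hx.2⟩
    have hdp := den_pos y hx.1 hx.2.le
    have hdp' : 0 < den y := by norm_num at hdp; linarith
    rw [sub_nonneg, div_le_div_iff₀ (by positivity) hc]
    have := tan_ineq y hx.1 hx.2.le
    linarith
  have := hm ⟨le_rfl, by positivity⟩ ⟨ha0, hlt⟩ ha0
  simp at this
  have hc : 0 < Real.cos a := Real.cos_pos_of_mem_Ioo ⟨by linarith [Real.pi_pos], hlt⟩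
  rw [← Real.log_le_iff_le_exp hc]
  linarith

end Khin
namespace Khin

/-- The comparison map. -/
noncomputable def bm (a : ℝ) : ℝ := a / Real.sqrt (den a)

lemma den_le_one (x : ℝ) : den x ≤ 1 - x ^ 2 / 6 := by
  unfold den
  have : 0 ≤ x ^ 4 := by positivity
  have : 0 ≤ x ^ 6 := by positivity
  linarith

lemma den_pos' (x : ℝ) (hx0 : 0 ≤ x) (hx : x ≤ Real.pi / 2) : 0 < den x := by
  have := den_pos x hx0 hx
  norm_num at this; linarith

lemma bm_sq (x : ℝ) (hx0 : 0 ≤ x) (hx : x ≤ Real.pi / 2) : bm x ^ 2 = x ^ 2 / den x := by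
  unfold bm
  rw [div_pow, Real.sq_sqrt (den_pos' x hx0 hx).le]

lemma hasDerivAt_bm (x : ℝ) (hx0 : 0 ≤ x) (hx : x ≤ Real.pi / 2) :
    HasDerivAt bm ((1 + x ^ 4 / 60 + 6 / 1000 * x ^ 6) / (Real.sqrt (den x)) ^ 3) x := by
  have hp := den_pos' x hx0 hx
  have hs : 0 < Real.sqrt (den x) := Real.sqrt_pos.2 hp
  have := (hasDerivAt_id x).div ((hasDerivAt_den x).sqrt hp.ne') hs.ne'
  convert! this using 1
  simp only [id]
  have hsq : Real.sqrt (den x) ^ 2 = den x := Real.sq_sqrt hp.le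
  field_simp
  rw [hsq]
  unfold den; ring

lemma le_bm (x : ℝ) (hx0 : 0 ≤ x) (hx : x ≤ Real.pi / 2) : x ≤ bm x := by
  have hp := den_pos' x hx0 hx
  have hs : 0 < Real.sqrt (den x) := Real.sqrt_pos.2 hp
  unfold bm
  rw [le_div_iff₀ hs]
  have : Real.sqrt (den x) ≤ 1 := by
    exact Real.sqrt_le_iff.2 ⟨by norm_num, by linarith [den_le_one x, sq_nonneg x]⟩
  nlinarith

lemma bm_end : bm (Real.pi / 2) ≤ Real.pi := by
  have h0 : 0 ≤ Real.pi / 2 := by positivity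
  have hp := den_pos (Real.pi / 2) h0 le_rfl
  have hs : 1 / 2 ≤ Real.sqrt (den (Real.pi / 2)) := by
    refine Real.le_sqrt_of_sq_le ?_
    norm_num at hp ⊢; linarith
  unfold bm
  rw [div_le_iff₀ (by linarith)]
  nlinarith [Real.pi_pos]

lemma gain (s ε : ℝ) (hs : 0 < s) (he : 0 < ε) (he2 : ε < Real.pi / 2) :
    (∫ a in ε..(Real.pi / 2), Real.cos a ^ s * (1 / a ^ 3 + a / 60 + 6 / 1000 * a ^ 3)) +
      Real.exp (-(ε ^ 2 / den ε) / 2 * s) / 12 ≤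
    ∫ u in ε..Real.pi, Real.exp (-(u ^ 2) / 2 * s) / u ^ 3 := by
  set G : ℝ → ℝ := fun u => Real.exp (-(u ^ 2) / 2 * s) / u ^ 3 with hG
  have hpi := Real.pi_pos
  have hGc : ContinuousOn G (Set.Ioi 0) := by
    refine ContinuousOn.div (by fun_prop) (by fun_prop) fun x hx => ?_
    exact pow_ne_zero _ (ne_of_gt hx)
  have hGi : ∀ x y : ℝ, 0 < x → 0 < y → IntervalIntegrable G volume x y := by
    intro x y hx hy
    refine (hGc.mono fun z hz => ?_).intervalIntegrable
    exact lt_of_lt_of_le (lt_min hx hy) hz.1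
  have hbε := le_bm ε he.le he2.le
  have hb0 : 0 < bm ε := he.trans_le hbε
  have hbπ : 0 < bm (Real.pi / 2) := lt_of_lt_of_le (by positivity) (le_bm (Real.pi / 2) (by positivity) le_rfl)
  have hsplit : ∫ u in ε..Real.pi, G u = (∫ u in ε..bm ε, G u) +
      (∫ u in (bm ε)..(bm (Real.pi / 2)), G u) + ∫ u in (bm (Real.pi / 2))..Real.pi, G u := by
    rw [intervalIntegral.integral_add_adjacent_intervals (hGi _ _ he hb0) (hGi _ _ hb0 hbπ),
      intervalIntegral.integral_add_adjacent_intervals (hGi _ _ he hbπ) (hGi _ _ hbπ hpi)]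
  have h3 : 0 ≤ ∫ u in (bm (Real.pi / 2))..Real.pi, G u := by
    refine intervalIntegral.integral_nonneg bm_end fun u hu => ?_
    have : 0 < u := hbπ.trans_le hu.1
    simp only [hG]; positivity
  have h1 : Real.exp (-(ε ^ 2 / den ε) / 2 * s) / 12 ≤ ∫ u in ε..bm ε, G u := by
    have hdp := den_pos' ε he.le he2.le
    set E := Real.exp (-(ε ^ 2 / den ε) / 2 * s)
    have hE : 0 < E := Real.exp_pos _
    have hprim : ∀ u ∈ Set.uIcc ε (bm ε), HasDerivAt (fun u : ℝ => -E / (2 * u ^ 2)) (E / u ^ 3) u := by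
      intro u hu
      rw [Set.uIcc_of_le hbε] at hu
      have hu0 : 0 < u := he.trans_le hu.1
      have := (hasDerivAt_const u (-E)).div ((hasDerivAt_pow 2 u).const_mul 2) (by positivity)
      convert! this using 1
      push_cast
      field_simp
      ring
    have hi : IntervalIntegrable (fun u : ℝ => E / u ^ 3) volume ε (bm ε) := by
      refine (ContinuousOn.div (by fun_prop) (by fun_prop) fun x hx => ?_).intervalIntegrable
      rw [Set.uIcc_of_le hbε] at hx
      exact pow_ne_zero _ (he.trans_le hx.1).ne'
    have hintg := intervalIntegral.integral_eq_sub_of_hasDerivAt hprim hi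
    have hmono : ∫ u in ε..bm ε, E / u ^ 3 ≤ ∫ u in ε..bm ε, G u := by
      refine intervalIntegral.integral_mono_on hbε hi (hGi _ _ he hb0) fun u hu => ?_
      have hu0 : 0 < u := he.trans_le hu.1
      simp only [hG, E]
      rw [← bm_sq ε he.le he2.le]
      have := hu.2
      gcongr
    refine le_trans ?_ hmono
    rw [hintg, bm_sq ε he.le he2.le]
    have h5 := den_le_one ε
    have : -E / (2 * (ε ^ 2 / den ε)) - -E / (2 * ε ^ 2) = E * ((1 - den ε) / ε ^ 2) / 2 := by
      field_simp; ring
    rw [this]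
    have h6 : 1 / 6 ≤ (1 - den ε) / ε ^ 2 := by
      rw [le_div_iff₀ (by positivity)]; linarith
    nlinarith
  have hle : ε ≤ Real.pi / 2 := he2.le
  have hmem : ∀ x ∈ Set.uIcc ε (Real.pi / 2), 0 < x ∧ x ≤ Real.pi / 2 := by
    intro x hx
    rw [Set.uIcc_of_le hle] at hx
    exact ⟨he.trans_le hx.1, hx.2⟩
  have h2 : (∫ a in ε..(Real.pi / 2), Real.cos a ^ s * (1 / a ^ 3 + a / 60 + 6 / 1000 * a ^ 3)) ≤
      ∫ u in (bm ε)..(bm (Real.pi / 2)), G u := by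
    have hdc : Continuous den := by unfold den; fun_prop
    have hcv := intervalIntegral.integral_comp_mul_deriv' (a := ε) (b := Real.pi / 2) (f := bm)
      (f' := fun x => (1 + x ^ 4 / 60 + 6 / 1000 * x ^ 6) / (Real.sqrt (den x)) ^ 3) (g := G)
      (fun x hx => hasDerivAt_bm x (hmem x hx).1.le (hmem x hx).2)
      (by
        refine ContinuousOn.div (by fun_prop) (by fun_prop) fun x hx => ?_
        exact pow_ne_zero _ (Real.sqrt_pos.2 (den_pos' x (hmem x hx).1.le (hmem x hx).2)).ne')
      (hGc.mono (by
        rintro _ ⟨x, hx, rfl⟩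
        exact (hmem x hx).1.trans_le (le_bm x (hmem x hx).1.le (hmem x hx).2)))
    rw [← hcv]
    refine intervalIntegral.integral_mono_on hle ?_ ?_ ?_
    · refine ContinuousOn.intervalIntegrable ?_
      refine ContinuousOn.mul ?_ ?_
      · exact (Continuous.rpow_const Real.continuous_cos fun x => Or.inr hs.le).continuousOn
      · refine ContinuousOn.add (ContinuousOn.add ?_ (by fun_prop)) (by fun_prop)
        refine ContinuousOn.div (by fun_prop) (by fun_prop) fun x hx => ?_
        exact pow_ne_zero _ (hmem x hx).1.ne'
    · refine ContinuousOn.intervalIntegrable ?_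
      refine ContinuousOn.mul (hGc.comp ?_ ?_) ?_
      · exact fun x hx => (hasDerivAt_bm x (hmem x hx).1.le (hmem x hx).2).continuousAt.continuousWithinAt
      · intro x hx
        exact (hmem x hx).1.trans_le (le_bm x (hmem x hx).1.le (hmem x hx).2)
      · refine ContinuousOn.div (by fun_prop) (by fun_prop) fun x hx => ?_
        exact pow_ne_zero _ (Real.sqrt_pos.2 (den_pos' x (hmem x hx).1.le (hmem x hx).2)).ne'
    · intro x hx
      rw [← Set.uIcc_of_le hle] at hx
      obtain ⟨hx0, hx1⟩ := hmem x hx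
      have hp := den_pos' x hx0.le hx1
      have hsq : 0 < Real.sqrt (den x) := Real.sqrt_pos.2 hp
      have e : (G ∘ bm) x * ((1 + x ^ 4 / 60 + 6 / 1000 * x ^ 6) / (Real.sqrt (den x)) ^ 3) =
          Real.exp (-(x ^ 2 / den x) / 2 * s) * (1 / x ^ 3 + x / 60 + 6 / 1000 * x ^ 3) := by
        simp only [Function.comp, hG]
        rw [bm_sq x hx0.le hx1]
        unfold bm
        field_simp
      rw [e]
      have hc0 : 0 ≤ Real.cos x := Real.cos_nonneg_of_mem_Icc ⟨by linarith, hx1⟩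
      have := Real.rpow_le_rpow hc0 (cos_le_exp x hx0.le hx1) hs.le
      rw [← Real.exp_mul] at this
      gcongr
  linarith

end Khin
namespace Khin

lemma rpow_le_W (y s : ℝ) (hy0 : 0 ≤ y) (hy1 : y ≤ 1) (hs : 36 / 25 ≤ s) :
    y ^ s ≤ 14 / 25 * y + 11 / 25 * y ^ 2 := by
  rcases hy0.eq_or_lt with h | h
  · subst h; rw [Real.zero_rpow (by linarith)]; norm_num
  have h1 : y ^ s ≤ y ^ (36 / 25 : ℝ) := Real.rpow_le_rpow_of_exponent_ge h hy1 hs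
  have h2 := Real.geom_mean_le_arith_mean2_weighted (show (0 : ℝ) ≤ 14 / 25 by norm_num)
    (show (0 : ℝ) ≤ 11 / 25 by norm_num) hy0 (sq_nonneg y) (by norm_num)
  rw [← Real.rpow_two, ← Real.rpow_mul hy0, ← Real.rpow_add h, Real.rpow_two] at h2
  refine h1.trans (le_trans (le_of_eq ?_) h2)
  norm_num

/-- Majorant of the first hump kernel. -/
noncomputable def PP (a : ℝ) : ℝ :=
  646 / 10000 + 393 / 10000 * a ^ 2 + 1 / 100 * a ^ 4 + 31 / 10000 * a ^ 6

lemma PP_bound (a : ℝ) (ha0 : 0 ≤ a) (ha : a ≤ Real.pi / 2) :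
    1 / (Real.pi - a) ^ 3 + 1 / (Real.pi + a) ^ 3 ≤ PP a := by
  have h1 : (3.14159 : ℝ) < Real.pi := by have := Real.pi_gt_d6; norm_num at *; linarith
  have h2 : Real.pi < 3.1416 := by have := Real.pi_lt_d4; norm_num at *; linarith
  have ha' : a ≤ 1.5708 := by norm_num at *; linarith
  have hm : 0 < 3.14159 - a := by norm_num at *; linarith
  have hm2 : 0 < 3.14159 + a := by norm_num at *; linarith
  have e1 : 1 / (Real.pi - a) ^ 3 + 1 / (Real.pi + a) ^ 3 ≤
      1 / (3.14159 - a) ^ 3 + 1 / (3.14159 + a) ^ 3 := by gcongr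
  refine e1.trans ?_
  rw [div_add_div _ _ (by positivity) (by positivity), div_le_iff₀ (by positivity)]
  have hr : a ^ 2 ≤ 2.4675 := by norm_num at *; nlinarith
  have hr0 : 0 ≤ a ^ 2 := sq_nonneg a
  have f1 : 1 * (3.14159 + a) ^ 3 + (3.14159 - a) ^ 3 * 1 =
    2 * 3.14159 ^ 3 + 6 * 3.14159 * a ^ 2 := by ring
  have f2 : PP a * ((3.14159 - a) ^ 3 * (3.14159 + a) ^ 3) =
    (646 / 10000 + 393 / 10000 * a ^ 2 + 1 / 100 * (a ^ 2) ^ 2 + 31 / 10000 * (a ^ 2) ^ 3) *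
      (3.14159 ^ 2 - a ^ 2) ^ 3 := by unfold PP; ring
  rw [f1, f2]
  generalize a ^ 2 = r at *
  have c : 0 ≤ 1.157 - 0.64912 * r + 0.08178 * r ^ 2 - 0.0031 * r ^ 3 := by
    norm_num at *
    nlinarith [mul_nonneg hr0 hr0, mul_nonneg (mul_nonneg hr0 hr0) (sub_nonneg.2 hr),
      mul_nonneg hr0 (sub_nonneg.2 hr), sq_nonneg (2.4675 - r)]
  have c2 := mul_nonneg (pow_nonneg hr0 3) c
  have p2 : 0 ≤ r ^ 2 := by positivity
  have p3 : 0 ≤ r ^ 3 := by positivity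
  have p4 : 0 ≤ r ^ 4 := by positivity
  have p5 : 0 ≤ r ^ 5 := by positivity
  norm_num at *
  nlinarith

lemma tail_lemma (s : ℝ) (hs : 36 / 25 ≤ s) :
    IntegrableOn (fun u => |Real.cos u| ^ s / u ^ 3) (Set.Ioi (3 * Real.pi / 2)) ∧
    ∫ u in Set.Ioi (3 * Real.pi / 2), |Real.cos u| ^ s / u ^ 3 ≤ 0.308 / (3 * Real.pi / 2) ^ 2 := by
  set V : ℝ → ℝ := fun u => -(77 / 250) / u ^ 2 + 21 / 50 * (Real.sin (2 * u) / (2 * u ^ 3) -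
    3 / 4 * Real.cos (2 * u) / u ^ 4 - 3 / 4 / u ^ 4) with hV
  set V' : ℝ → ℝ := fun u => 77 / 125 / u ^ 3 + 21 / 50 * Real.cos (2 * u) / u ^ 3 +
    63 / 50 * (1 + Real.cos (2 * u)) / u ^ 5 with hV'
  have hpi := Real.pi_pos
  have hd : ∀ u : ℝ, 0 < u → HasDerivAt V (V' u) u := by
    intro u hu
    have h2u : HasDerivAt (fun u : ℝ => 2 * u) 2 u := by simpa using (hasDerivAt_id u).const_mul 2
    have hsin := h2u.sin
    have hcos := h2u.cos
    have := ((hasDerivAt_const u (-(77 / 250) : ℝ)).div (hasDerivAt_pow 2 u) (by positivity)).add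
      (((((hsin.div ((hasDerivAt_pow 3 u).const_mul 2) (by positivity))).sub
        ((hcos.const_mul (3 / 4)).div (hasDerivAt_pow 4 u) (by positivity))).sub
        ((hasDerivAt_const u (3 / 4 : ℝ)).div (hasDerivAt_pow 4 u) (by positivity))).const_mul (21 / 50))
    convert! this using 1
    simp only [hV']
    push_cast
    field_simp
    ring
  have hpt : ∀ u : ℝ, 0 < u → |Real.cos u| ^ s / u ^ 3 ≤ V' u := by
    intro u hu
    have hw := rpow_le_W |Real.cos u| s (abs_nonneg _) (Real.abs_cos_le_one u) hs
    rw [sq_abs] at hw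
    have h1 : |Real.cos u| ≤ (Real.cos u ^ 2 + 0.49) / 1.4 := by
      rw [le_div_iff₀ (by norm_num)]
      nlinarith [sq_nonneg (|Real.cos u| - 0.7), sq_abs (Real.cos u)]
    have h2 : Real.cos (2 * u) = 2 * Real.cos u ^ 2 - 1 := Real.cos_two_mul u
    have h3 : |Real.cos u| ^ s ≤ 77 / 125 + 21 / 50 * Real.cos (2 * u) := by
      rw [h2]; norm_num at h1; linarith
    have h4 : 0 ≤ 63 / 50 * (1 + Real.cos (2 * u)) / u ^ 5 := by
      have := Real.neg_one_le_cos (2 * u)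
      have : 0 ≤ 1 + Real.cos (2 * u) := by linarith
      positivity
    simp only [hV']
    rw [← add_div]
    have : |Real.cos u| ^ s / u ^ 3 ≤ (77 / 125 + 21 / 50 * Real.cos (2 * u)) / u ^ 3 := by gcongr
    linarith
  have h0 : ∀ u : ℝ, 0 < u → 0 ≤ |Real.cos u| ^ s / u ^ 3 := fun u hu => by positivity
  have hpos : ∀ u ∈ Set.Ioi (3 * Real.pi / 2), 0 < u := by
    intro u hu
    exact lt_trans (by positivity) (Set.mem_Ioi.1 hu)
  have hlim : Filter.Tendsto V Filter.atTop (nhds 0) := by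
    have hb : ∀ k : ℕ, k ≠ 0 → ∀ c : ℝ, Filter.Tendsto (fun u : ℝ => c / u ^ k) Filter.atTop (nhds 0) := by
      intro k hk c
      exact Filter.Tendsto.const_div_atTop (Filter.tendsto_pow_atTop hk) c
    have hup : Filter.Tendsto (fun u : ℝ => (77/250) / u ^ 2 + (21 / 100) / u ^ 3 + 63 / 100 / u ^ 4)
        Filter.atTop (nhds 0) := by
      simpa using ((hb 2 (by norm_num) (77/250)).add (hb 3 (by norm_num) (21 / 100))).add
        (hb 4 (by norm_num) (63/100))
    refine squeeze_zero_norm' ?_ hup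
    filter_upwards [Filter.eventually_gt_atTop 0] with u hu
    rw [Real.norm_eq_abs, abs_le]
    have s1 := Real.neg_one_le_sin (2 * u)
    have s2 := Real.sin_le_one (2 * u)
    have c1 := Real.neg_one_le_cos (2 * u)
    have c2 := Real.cos_le_one (2 * u)
    have e : V u = -(77 / 250) * (1 / u ^ 2) + 21 / 100 * (Real.sin (2 * u)) * (1 / u ^ 3) -
      63 / 200 * (Real.cos (2 * u)) * (1 / u ^ 4) - 63 / 200 * (1 / u ^ 4) := by
      simp only [hV]; field_simp; ring
    have e2 : (77/250) / u ^ 2 + (21 / 100) / u ^ 3 + 63 / 100 / u ^ 4 =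
      (77/250) * (1 / u ^ 2) + (21 / 100) * (1 / u ^ 3) + 63 / 100 * (1 / u ^ 4) := by
      field_simp
    rw [e, e2]
    have q2 : 0 < 1 / u ^ 2 := by positivity
    have q3 : 0 < 1 / u ^ 3 := by positivity
    have q4 : 0 < 1 / u ^ 4 := by positivity
    constructor <;> nlinarith
  have hcw : ContinuousWithinAt V (Set.Ici (3 * Real.pi / 2)) (3 * Real.pi / 2) :=
    (hd _ (by positivity)).continuousAt.continuousWithinAt
  have hnn : ∀ x ∈ Set.Ioi (3 * Real.pi / 2), 0 ≤ V' x := fun x hx =>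
    (h0 x (hpos x hx)).trans (hpt x (hpos x hx))
  have hI := integral_Ioi_of_hasDerivAt_of_nonneg hcw (fun x hx => hd x (hpos x hx)) hnn hlim
  have hII := integrableOn_Ioi_deriv_of_nonneg hcw (fun x hx => hd x (hpos x hx)) hnn hlim
  have hmeas : Measurable (fun u => |Real.cos u| ^ s / u ^ 3) := by fun_prop
  have hintg : IntegrableOn (fun u => |Real.cos u| ^ s / u ^ 3) (Set.Ioi (3 * Real.pi / 2)) := by
    refine Integrable.mono' hII hmeas.aestronglyMeasurable ?_
    refine (ae_restrict_iff' measurableSet_Ioi).2 (Filter.Eventually.of_forall fun u hu => ?_)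
    rw [Real.norm_eq_abs, abs_of_nonneg (h0 u (hpos u hu))]
    exact hpt u (hpos u hu)
  refine ⟨hintg, ?_⟩
  refine (setIntegral_mono_on hintg hII measurableSet_Ioi fun u hu => hpt u (hpos u hu)).trans ?_
  rw [hI]
  have e1 : Real.sin (2 * (3 * Real.pi / 2)) = 0 := by
    rw [show 2 * (3 * Real.pi / 2) = ((3 : ℕ) : ℝ) * Real.pi by push_cast; ring, Real.sin_nat_mul_pi]
  have e2 : Real.cos (2 * (3 * Real.pi / 2)) = -1 := by
    rw [show 2 * (3 * Real.pi / 2) = Real.pi + 2 * Real.pi by ring, Real.cos_add_two_pi, Real.cos_pi]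
  simp only [hV]
  rw [e1, e2]
  apply le_of_eq
  ring

end Khin
namespace Khin

lemma hump (s : ℝ) (hs : 0 < s) :
    ∫ u in (Real.pi / 2)..(3 * Real.pi / 2), |Real.cos u| ^ s / u ^ 3 =
    ∫ a in (0 : ℝ)..(Real.pi / 2), Real.cos a ^ s *
      (1 / (Real.pi - a) ^ 3 + 1 / (Real.pi + a) ^ 3) := by
  have hpi := Real.pi_pos
  have hci : ∀ x y : ℝ, 0 < x → 0 < y →
      IntervalIntegrable (fun u => |Real.cos u| ^ s / u ^ 3) volume x y := by
    intro x y hx hy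
    refine ContinuousOn.intervalIntegrable ?_
    refine ContinuousOn.div ?_ (by fun_prop) fun z hz => ?_
    · exact (Continuous.rpow_const (by fun_prop) fun x => Or.inr hs.le).continuousOn
    · exact pow_ne_zero _ (lt_of_lt_of_le (lt_min hx hy) hz.1).ne'
  rw [← intervalIntegral.integral_add_adjacent_intervals (hci (Real.pi / 2) Real.pi (by positivity) hpi)
    (hci _ _ hpi (by positivity))]
  have h1 := intervalIntegral.integral_comp_sub_left (a := 0) (b := Real.pi / 2)
    (fun u => |Real.cos u| ^ s / u ^ 3) Real.pi
  have h2 := intervalIntegral.integral_comp_add_left (a := 0) (b := Real.pi / 2)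
    (fun u => |Real.cos u| ^ s / u ^ 3) Real.pi
  rw [sub_zero, show Real.pi - Real.pi / 2 = Real.pi / 2 by ring] at h1
  rw [add_zero, show Real.pi + Real.pi / 2 = 3 * Real.pi / 2 by ring] at h2
  rw [← h1, ← h2, ← intervalIntegral.integral_add]
  · refine intervalIntegral.integral_congr fun a ha => ?_
    rw [Set.uIcc_of_le (by positivity)] at ha
    have hc0 : 0 ≤ Real.cos a := Real.cos_nonneg_of_mem_Icc ⟨by linarith [ha.1], ha.2⟩
    simp only [Real.cos_pi_sub, abs_neg]
    rw [add_comm Real.pi a, Real.cos_add_pi, abs_neg, abs_of_nonneg hc0]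
    ring
  · refine ContinuousOn.intervalIntegrable ?_
    refine ContinuousOn.div ?_ (by fun_prop) fun z hz => ?_
    · exact (Continuous.rpow_const (by fun_prop) fun x => Or.inr hs.le).continuousOn
    · rw [Set.uIcc_of_le (by positivity)] at hz
      exact pow_ne_zero _ (by linarith [hz.2])
  · refine ContinuousOn.intervalIntegrable ?_
    refine ContinuousOn.div ?_ (by fun_prop) fun z hz => ?_
    · exact (Continuous.rpow_const (by fun_prop) fun x => Or.inr hs.le).continuousOn
    · rw [Set.uIcc_of_le (by positivity)] at hz
      exact pow_ne_zero _ (by linarith [hz.1])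

/-- The remaining polynomial weight. -/
noncomputable def qq (a : ℝ) : ℝ := PP a - a / 60 - 6 / 1000 * a ^ 3

lemma qq_nonneg (a : ℝ) (ha0 : 0 ≤ a) (ha : a ≤ Real.pi / 2) : 0 ≤ qq a := by
  have hp := Real.pi_lt_d2
  have h1 : a ≤ 1.575 := by linarith
  have h3 : a ^ 3 ≤ 1.575 * a ^ 2 := by nlinarith [sq_nonneg a]
  unfold qq PP
  have : 0 ≤ a ^ 4 := by positivity
  have : 0 ≤ a ^ 6 := by positivity
  norm_num at *
  nlinarith [sq_nonneg a]

lemma numeric_int :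
    ∫ a in (0 : ℝ)..(Real.pi / 2), (14 / 25 * Real.cos a + 11 / 25 * Real.cos a ^ 2) * qq a ≤
      1 / 12 - 0.0013 - 0.308 / (3 * Real.pi / 2) ^ 2 := by
  set q1 : ℝ → ℝ := fun a => 393 / 5000 * a + 1 / 25 * a ^ 3 + 186 / 10000 * a ^ 5 - 1 / 60
    - 18 / 1000 * a ^ 2
  set q2 : ℝ → ℝ := fun a => 393 / 5000 + 3 / 25 * a ^ 2 + 93 / 1000 * a ^ 4 - 36 / 1000 * a
  set q3 : ℝ → ℝ := fun a => 6 / 25 * a + 372 / 1000 * a ^ 3 - 36 / 1000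
  set q4 : ℝ → ℝ := fun a => 6 / 25 + 1116 / 1000 * a ^ 2
  set q5 : ℝ → ℝ := fun a => 2232 / 1000 * a
  set Q : ℝ → ℝ := fun a => 646 / 10000 * a + 131 / 10000 * a ^ 3 + 1 / 500 * a ^ 5 +
    31 / 70000 * a ^ 7 - a ^ 2 / 120 - 3 / 2000 * a ^ 4
  have hpw : ∀ (k : ℕ) (a : ℝ), HasDerivAt (fun a : ℝ => a ^ k) ((k : ℝ) * a ^ (k - 1)) a :=
    fun k a => hasDerivAt_pow k a
  have d0 : ∀ a, HasDerivAt qq (q1 a) a := by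
    intro a
    have := (((((hpw 2 a).const_mul (393 / 10000)).const_add (646 / 10000)).add
      ((hpw 4 a).const_mul (1 / 100))).add ((hpw 6 a).const_mul (31 / 10000))).sub
      ((hasDerivAt_id a).div_const 60) |>.sub ((hpw 3 a).const_mul (6 / 1000))
    convert! this using 1; simp only [q1]; norm_num; ring
  have d1 : ∀ a, HasDerivAt q1 (q2 a) a := by
    intro a
    have := (((((hasDerivAt_id a).const_mul (393 / 5000)).add ((hpw 3 a).const_mul (1 / 25))).add
      ((hpw 5 a).const_mul (186 / 10000))).sub_const (1 / 60)).sub ((hpw 2 a).const_mul (18 / 1000))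
    convert! this using 1; simp only [q2]; norm_num; ring
  have d2 : ∀ a, HasDerivAt q2 (q3 a) a := by
    intro a
    have := ((((hpw 2 a).const_mul (3 / 25)).const_add (393 / 5000)).add
      ((hpw 4 a).const_mul (93 / 1000))).sub ((hasDerivAt_id a).const_mul (36 / 1000))
    convert! this using 1; simp only [q3]; norm_num; ring
  have d3 : ∀ a, HasDerivAt q3 (q4 a) a := by
    intro a
    have := (((hasDerivAt_id a).const_mul (6 / 25)).add
      ((hpw 3 a).const_mul (372 / 1000))).sub_const (36 / 1000)
    convert! this using 1; simp only [q4]; norm_num; ring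
  have d4 : ∀ a, HasDerivAt q4 (q5 a) a := by
    intro a
    have := ((hpw 2 a).const_mul (1116 / 1000)).const_add (6 / 25)
    convert! this using 1; simp only [q5]; norm_num; ring
  have d5 : ∀ a, HasDerivAt q5 (2232 / 1000) a := by
    intro a
    have := (hasDerivAt_id a).const_mul (2232 / 1000)
    convert! this using 1; norm_num
  have dQ : ∀ a, HasDerivAt Q (qq a) a := by
    intro a
    have := (((((hasDerivAt_id a).const_mul (646 / 10000)).add ((hpw 3 a).const_mul (131 / 10000))).add
      ((hpw 5 a).const_mul (1 / 500))).add ((hpw 7 a).const_mul (31 / 70000))).sub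
      ((hpw 2 a).div_const 120) |>.sub ((hpw 4 a).const_mul (3 / 2000))
    convert! this using 1; unfold qq PP; norm_num; ring
  set Fp : ℝ → ℝ := fun a =>
    14 / 25 * ((qq a - q2 a + q4 a - 2232 / 1000) * Real.sin a + (q1 a - q3 a + q5 a) * Real.cos a) +
    11 / 50 * Q a + 11 / 50 * ((qq a / 2 - q2 a / 8 + q4 a / 32 - 2232 / 1000 / 128) * Real.sin (2 * a) +
      (q1 a / 4 - q3 a / 16 + q5 a / 64) * Real.cos (2 * a))
  have dF : ∀ a, HasDerivAt Fp ((14 / 25 * Real.cos a + 11 / 25 * Real.cos a ^ 2) * qq a) a := by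
    intro a
    have h2u : HasDerivAt (fun u : ℝ => 2 * u) 2 a := by simpa using (hasDerivAt_id a).const_mul 2
    have A1 := ((((d0 a).sub (d2 a)).add (d4 a)).sub_const (2232 / 1000)).mul (Real.hasDerivAt_sin a)
    have A2 := (((d1 a).sub (d3 a)).add (d5 a)).mul (Real.hasDerivAt_cos a)
    have A3 := (((((d0 a).div_const 2).sub ((d2 a).div_const 8)).add ((d4 a).div_const 32)).sub_const
      (2232 / 1000 / 128)).mul h2u.sin
    have A4 := ((((d1 a).div_const 4).sub ((d3 a).div_const 16)).add ((d5 a).div_const 64)).mul h2u.cos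
    have := (((A1.add A2).const_mul (14 / 25)).add ((dQ a).const_mul (11 / 50))).add
      ((A3.add A4).const_mul (11 / 50))
    convert! this using 1
    have hc : Real.cos a ^ 2 = (1 + Real.cos (2 * a)) / 2 := by rw [Real.cos_two_mul]; ring
    rw [hc]
    simp only [Pi.add_apply, Pi.sub_apply]
    ring
  have hqc : Continuous qq := by unfold qq PP; fun_prop
  rw [intervalIntegral.integral_eq_sub_of_hasDerivAt (fun a _ => dF a)
    (Continuous.intervalIntegrable (by fun_prop) _ _)]
  have hpi1 := Real.pi_gt_d6
  have hpi2 := Real.pi_lt_d6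
  have hT : 0.308 / (3 * Real.pi / 2) ^ 2 ≤ 0.0138702 := by
    rw [div_le_iff₀ (by positivity)]
    norm_num at *; nlinarith
  have e1 : 2 * (Real.pi / 2) = Real.pi := by ring
  simp only [Fp, q1, q2, q3, q4, q5, Q, qq, PP]
  rw [e1]
  simp only [Real.sin_pi_div_two, Real.cos_pi_div_two, Real.sin_pi, Real.cos_pi, mul_zero,
    Real.sin_zero, Real.cos_zero]
  set x := Real.pi / 2 with hx
  have hx1 : 1.570796 ≤ x := by norm_num at *; linarith
  have hx2 : x ≤ 1.5707965 := by norm_num at *; linarith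
  have l2 : 1.570796 ^ 2 ≤ x ^ 2 := by gcongr
  have l3 : 1.570796 ^ 3 ≤ x ^ 3 := by gcongr
  have l4 : 1.570796 ^ 4 ≤ x ^ 4 := by gcongr
  have l5 : 1.570796 ^ 5 ≤ x ^ 5 := by gcongr
  have l6 : 1.570796 ^ 6 ≤ x ^ 6 := by gcongr
  have l7 : 1.570796 ^ 7 ≤ x ^ 7 := by gcongr
  have hx0 : 0 ≤ x := by norm_num at *; linarith
  have u2 : x ^ 2 ≤ 1.5707965 ^ 2 := by gcongr
  have u3 : x ^ 3 ≤ 1.5707965 ^ 3 := by gcongr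
  have u4 : x ^ 4 ≤ 1.5707965 ^ 4 := by gcongr
  have u5 : x ^ 5 ≤ 1.5707965 ^ 5 := by gcongr
  have u6 : x ^ 6 ≤ 1.5707965 ^ 6 := by gcongr
  have u7 : x ^ 7 ≤ 1.5707965 ^ 7 := by gcongr
  norm_num at *
  linarith

lemma loss (s : ℝ) (hs : 36 / 25 ≤ s) :
    (∫ u in (Real.pi / 2)..(3 * Real.pi / 2), |Real.cos u| ^ s / u ^ 3) -
      (∫ a in (0 : ℝ)..(Real.pi / 2), Real.cos a ^ s * (a / 60 + 6 / 1000 * a ^ 3)) +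
      0.308 / (3 * Real.pi / 2) ^ 2 ≤ 1 / 12 - 0.0013 := by
  have hpi := Real.pi_pos
  have hs0 : 0 < s := by linarith
  rw [hump s hs0, ← intervalIntegral.integral_sub]
  · have : ∫ a in (0 : ℝ)..(Real.pi / 2), (Real.cos a ^ s *
        (1 / (Real.pi - a) ^ 3 + 1 / (Real.pi + a) ^ 3) - Real.cos a ^ s * (a / 60 + 6 / 1000 * a ^ 3)) ≤
        ∫ a in (0 : ℝ)..(Real.pi / 2), (14 / 25 * Real.cos a + 11 / 25 * Real.cos a ^ 2) * qq a := by
      refine intervalIntegral.integral_mono_on (by positivity) ?_ ?_ ?_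
      · refine ContinuousOn.intervalIntegrable (ContinuousOn.sub (ContinuousOn.mul ?_ ?_) (ContinuousOn.mul ?_ ?_))
        · exact (Continuous.rpow_const (by fun_prop) fun x => Or.inr hs0.le).continuousOn
        · refine ContinuousOn.add (ContinuousOn.div (by fun_prop) (by fun_prop) fun z hz => ?_)
            (ContinuousOn.div (by fun_prop) (by fun_prop) fun z hz => ?_)
          · rw [Set.uIcc_of_le (by positivity)] at hz
            exact pow_ne_zero _ (by linarith [hz.2])
          · rw [Set.uIcc_of_le (by positivity)] at hz
            exact pow_ne_zero _ (by linarith [hz.1])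
        · exact (Continuous.rpow_const (by fun_prop) fun x => Or.inr hs0.le).continuousOn
        · fun_prop
      · have hqc : Continuous qq := by unfold qq PP; fun_prop
        exact Continuous.intervalIntegrable (by fun_prop) _ _
      · intro a ha
        have hc0 : 0 ≤ Real.cos a := Real.cos_nonneg_of_mem_Icc ⟨by linarith [ha.1], ha.2⟩
        have hq := qq_nonneg a ha.1 ha.2
        have hP := PP_bound a ha.1 ha.2
        have hW := rpow_le_W (Real.cos a) s hc0 (Real.cos_le_one a) hs
        have hn : 0 ≤ Real.cos a ^ s := by positivity
        calc _ = Real.cos a ^ s * (1 / (Real.pi - a) ^ 3 + 1 / (Real.pi + a) ^ 3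
              - (a / 60 + 6 / 1000 * a ^ 3)) := by ring
          _ ≤ Real.cos a ^ s * qq a := by
            gcongr; unfold qq; linarith
          _ ≤ _ := by gcongr
    have := numeric_int
    linarith
  · refine ContinuousOn.intervalIntegrable (ContinuousOn.mul ?_ ?_)
    · exact (Continuous.rpow_const (by fun_prop) fun x => Or.inr hs0.le).continuousOn
    · refine ContinuousOn.add (ContinuousOn.div (by fun_prop) (by fun_prop) fun z hz => ?_)
        (ContinuousOn.div (by fun_prop) (by fun_prop) fun z hz => ?_)
      · rw [Set.uIcc_of_le (by positivity)] at hz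
        exact pow_ne_zero _ (by linarith [hz.2])
      · rw [Set.uIcc_of_le (by positivity)] at hz
        exact pow_ne_zero _ (by linarith [hz.1])
  · refine ContinuousOn.intervalIntegrable (ContinuousOn.mul ?_ (by fun_prop))
    exact (Continuous.rpow_const (by fun_prop) fun x => Or.inr hs0.le).continuousOn

end Khin
namespace Khin

lemma J_eps (s : ℝ) (hs : 36 / 25 ≤ s) : ∃ ε : ℝ, 0 < ε ∧ ε < Real.pi / 2 ∧
    IntegrableOn (fun u => |Real.cos u| ^ s / u ^ 3) (Set.Ioi ε) ∧
    ∫ u in Set.Ioi ε, |Real.cos u| ^ s / u ^ 3 ≤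
      ∫ u in ε..Real.pi, Real.exp (-(u ^ 2) / 2 * s) / u ^ 3 := by
  have hpi := Real.pi_pos
  have hs0 : 0 < s := by linarith
  have hdc : Continuous den := by unfold den; fun_prop
  have hlim : Filter.Tendsto (fun ε : ℝ => Real.exp (-(ε ^ 2 / den ε) / 2 * s) / 12 - ε)
      (nhdsWithin 0 (Set.Ioi 0)) (nhds (1 / 12)) := by
    have hc : ContinuousAt (fun ε : ℝ => Real.exp (-(ε ^ 2 / den ε) / 2 * s) / 12 - ε) 0 := by
      have : ContinuousAt (fun ε : ℝ => ε ^ 2 / den ε) 0 := by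
        refine ContinuousAt.div (by fun_prop) (by fun_prop) ?_
        simp [den]
      fun_prop
    have := hc.tendsto
    simp only [den] at this
    norm_num at this
    refine Filter.Tendsto.mono_left ?_ nhdsWithin_le_nhds
    convert! this using 1
  have hev := hlim.eventually (lt_mem_nhds (show (1 / 12 - 0.0013 : ℝ) < 1 / 12 by norm_num))
  have hlt : ∀ᶠ ε : ℝ in nhdsWithin 0 (Set.Ioi 0), ε < 1 :=
    nhdsWithin_le_nhds (gt_mem_nhds one_pos)
  obtain ⟨ε, ⟨h1, h2⟩, h3⟩ := ((hev.and hlt).and self_mem_nhdsWithin).exists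
  have he : 0 < ε := h3
  have he2 : ε < Real.pi / 2 := by linarith [Real.pi_gt_three]
  refine ⟨ε, he, he2, ?_⟩
  have hci : ∀ x y : ℝ, 0 < x → 0 < y →
      IntervalIntegrable (fun u => |Real.cos u| ^ s / u ^ 3) volume x y := by
    intro x y hx hy
    refine ContinuousOn.intervalIntegrable ?_
    refine ContinuousOn.div ?_ (by fun_prop) fun z hz => ?_
    · exact (Continuous.rpow_const (by fun_prop) fun x => Or.inr hs0.le).continuousOn
    · exact pow_ne_zero _ (lt_of_lt_of_le (lt_min hx hy) hz.1).ne'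
  obtain ⟨t1, t2⟩ := tail_lemma s hs
  have hle : ε ≤ 3 * Real.pi / 2 := by linarith
  have hI : IntegrableOn (fun u => |Real.cos u| ^ s / u ^ 3) (Set.Ioi ε) := by
    rw [← Set.Ioc_union_Ioi_eq_Ioi hle]
    refine IntegrableOn.union ?_ t1
    exact (intervalIntegrable_iff_integrableOn_Ioc_of_le hle).1 (hci _ _ he (by positivity))
  refine ⟨hI, ?_⟩
  rw [← intervalIntegral.integral_interval_add_Ioi hI t1,
    ← intervalIntegral.integral_add_adjacent_intervals (hci ε (Real.pi / 2) he (by positivity))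
    (hci _ _ (by positivity) (by positivity))]
  have hg := gain s ε hs0 he he2
  have hl := loss s hs
  have hcs : Continuous (fun a => Real.cos a ^ s) :=
    Continuous.rpow_const (by fun_prop) fun x => Or.inr hs0.le
  have hm : ∀ x y : ℝ, IntervalIntegrable (fun a => Real.cos a ^ s * (a / 60 + 6 / 1000 * a ^ 3))
      volume x y := fun x y => (Continuous.intervalIntegrable (by fun_prop) _ _)
  have hm3 : IntervalIntegrable (fun a => Real.cos a ^ s * (1 / a ^ 3)) volume ε (Real.pi / 2) := by
    refine ContinuousOn.intervalIntegrable (ContinuousOn.mul hcs.continuousOn ?_)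
    refine ContinuousOn.div (by fun_prop) (by fun_prop) fun z hz => ?_
    rw [Set.uIcc_of_le he2.le] at hz
    exact pow_ne_zero _ (he.trans_le hz.1).ne'
  have e1 : (∫ a in ε..(Real.pi / 2), Real.cos a ^ s * (1 / a ^ 3 + a / 60 + 6 / 1000 * a ^ 3)) =
      (∫ a in ε..(Real.pi / 2), Real.cos a ^ s * (1 / a ^ 3)) +
      ∫ a in ε..(Real.pi / 2), Real.cos a ^ s * (a / 60 + 6 / 1000 * a ^ 3) := by
    rw [← intervalIntegral.integral_add hm3 (hm _ _)]
    refine intervalIntegral.integral_congr fun a _ => ?_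
    ring
  have e2 : (∫ a in ε..(Real.pi / 2), |Real.cos a| ^ s / a ^ 3) =
      ∫ a in ε..(Real.pi / 2), Real.cos a ^ s * (1 / a ^ 3) := by
    refine intervalIntegral.integral_congr fun a ha => ?_
    rw [Set.uIcc_of_le he2.le] at ha
    have hc0 : 0 ≤ Real.cos a := Real.cos_nonneg_of_mem_Icc ⟨by linarith [ha.1], ha.2⟩
    rw [abs_of_nonneg hc0]; ring
  have e3 := intervalIntegral.integral_add_adjacent_intervals (hm 0 ε) (hm ε (Real.pi / 2))
  have e4 : ∫ a in (0 : ℝ)..ε, Real.cos a ^ s * (a / 60 + 6 / 1000 * a ^ 3) ≤ ε := by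
    have : ∫ a in (0 : ℝ)..ε, Real.cos a ^ s * (a / 60 + 6 / 1000 * a ^ 3) ≤ ∫ a in (0 : ℝ)..ε, (1 : ℝ) := by
      refine intervalIntegral.integral_mono_on he.le (hm _ _) (by simp) fun a ha => ?_
      have hc0 : 0 ≤ Real.cos a := Real.cos_nonneg_of_mem_Icc ⟨by linarith [ha.1], by linarith [ha.2]⟩
      have h1 : Real.cos a ^ s ≤ 1 := Real.rpow_le_one hc0 (Real.cos_le_one a) hs0.le
      have ha1 : a ≤ 1 := ha.2.trans h2.le
      have h3 : a ^ 3 ≤ 1 := pow_le_one₀ ha.1 ha1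
      have h4 : 0 ≤ a / 60 + 6 / 1000 * a ^ 3 := by have := ha.1; positivity
      have h5 : a / 60 + 6 / 1000 * a ^ 3 ≤ 1 := by linarith
      have h6 : 0 ≤ Real.cos a ^ s := by positivity
      exact mul_le_one₀ h1 h4 h5
    simpa using this
  rw [e2]
  rw [e1] at hg
  linarith

lemma crossing : ∃ c : ℝ, 0 < c ∧ c ≤ Real.pi ∧
    (∀ u, 0 < u → u ≤ c → |Real.cos u| ≤ Real.exp (-(u ^ 2) / 2)) ∧
    (∀ u, c ≤ u → u ≤ Real.pi → Real.exp (-(u ^ 2) / 2) ≤ |Real.cos u|) := by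
  have hpi := Real.pi_pos
  have hc : ContinuousOn (fun u => Real.exp (-(u ^ 2) / 2) + Real.cos u)
      (Set.Icc (Real.pi / 2) Real.pi) := by fun_prop
  have hiv := intermediate_value_Icc' (by linarith : Real.pi / 2 ≤ Real.pi) hc
  have h0 : (0 : ℝ) ∈ Set.Icc (Real.exp (-(Real.pi ^ 2) / 2) + Real.cos Real.pi)
      (Real.exp (-((Real.pi / 2) ^ 2) / 2) + Real.cos (Real.pi / 2)) := by
    constructor
    · rw [Real.cos_pi]
      have : Real.exp (-(Real.pi ^ 2) / 2) ≤ 1 := Real.exp_le_one_iff.2 (by nlinarith)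
      linarith
    · rw [Real.cos_pi_div_two, add_zero]; positivity
  obtain ⟨c, ⟨hc1, hc2⟩, hc0⟩ := hiv h0
  simp only at hc0
  have hcpos : 0 < c := by linarith
  have hdec : ∀ x y : ℝ, 0 ≤ x → x ≤ y → Real.exp (-(y ^ 2) / 2) ≤ Real.exp (-(x ^ 2) / 2) := by
    intro x y hx hxy
    gcongr
  refine ⟨c, hcpos, hc2, ?_, ?_⟩
  · intro u hu huc
    rcases le_total u (Real.pi / 2) with h | h
    · have hc0 : 0 ≤ Real.cos u := Real.cos_nonneg_of_mem_Icc ⟨by linarith, h⟩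
      rw [abs_of_nonneg hc0]
      refine (cos_le_exp u hu.le h).trans (Real.exp_le_exp.2 ?_)
      have hd := den_pos' u hu.le h
      have : u ^ 2 ≤ u ^ 2 / den u := by
        rw [le_div_iff₀ hd]
        nlinarith [den_le_one u, sq_nonneg u]
      linarith
    · have h1 : Real.cos u ≤ 0 := Real.cos_nonpos_of_pi_div_two_le_of_le h (by linarith)
      rw [abs_of_nonpos h1]
      have h2 : Real.cos c ≤ Real.cos u := Real.cos_le_cos_of_nonneg_of_le_pi hu.le hc2 huc
      have := hdec u c hu.le huc
      linarith
  · intro u huc hup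
    have h1 : Real.cos u ≤ 0 := Real.cos_nonpos_of_pi_div_two_le_of_le (by linarith) (by linarith)
    rw [abs_of_nonpos h1]
    have h2 : Real.cos u ≤ Real.cos c := Real.cos_le_cos_of_nonneg_of_le_pi hcpos.le hup huc
    have := hdec c u hcpos.le huc
    linarith

lemma Q_nonneg (s p : ℝ) (hs : 36 / 25 ≤ s) (hp : 2 ≤ p)
    (hintg : IntegrableOn (fun u : ℝ => (Real.exp (-(u ^ 2) / 2 * s) - |Real.cos u| ^ s) * u ^ (-(p + 1)))
      (Set.Ioi 0)) :
    0 ≤ ∫ u in Set.Ioi (0 : ℝ), (Real.exp (-(u ^ 2) / 2 * s) - |Real.cos u| ^ s) * u ^ (-(p + 1)) := by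
  have hs0 : 0 < s := by linarith
  obtain ⟨ε, he, he2, hI, hJ⟩ := J_eps s hs
  obtain ⟨c, hc0, hcp, hcl, hcr⟩ := crossing
  have hpi := Real.pi_pos
  set D : ℝ → ℝ := fun u => (Real.exp (-(u ^ 2) / 2 * s) - |Real.cos u| ^ s) * u ^ (-(p + 1)) with hD
  have hDl : ∀ u, 0 < u → u ≤ c → 0 ≤ Real.exp (-(u ^ 2) / 2 * s) - |Real.cos u| ^ s := by
    intro u hu huc
    rw [Real.exp_mul]
    exact sub_nonneg.2 (Real.rpow_le_rpow (abs_nonneg _) (hcl u hu huc) hs0.le)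
  have hDr : ∀ u, c ≤ u → u ≤ Real.pi → Real.exp (-(u ^ 2) / 2 * s) - |Real.cos u| ^ s ≤ 0 := by
    intro u hu huc
    rw [Real.exp_mul]
    exact sub_nonpos.2 (Real.rpow_le_rpow (Real.exp_pos _).le (hcr u hu huc) hs0.le)
  have hεc : ε ≤ c := by
    by_contra h
    push Not at h
    have h1 := hcr (Real.pi / 2) (by linarith) (by linarith)
    rw [Real.cos_pi_div_two, abs_zero] at h1
    exact absurd h1 (not_le.2 (Real.exp_pos _))
  have hG : IntegrableOn (fun u : ℝ => Real.exp (-(u ^ 2) / 2 * s) / u ^ 3) (Set.Ioc ε Real.pi) := by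
    refine (intervalIntegrable_iff_integrableOn_Ioc_of_le (by linarith)).1 ?_
    refine ContinuousOn.intervalIntegrable (ContinuousOn.div (by fun_prop) (by fun_prop) fun z hz => ?_)
    rw [Set.uIcc_of_le (by linarith)] at hz
    exact pow_ne_zero _ (he.trans_le hz.1).ne'
  set GI : ℝ → ℝ := (Set.Ioc ε Real.pi).indicator (fun u : ℝ => Real.exp (-(u ^ 2) / 2 * s) / u ^ 3) with hGI
  have hGIi : IntegrableOn GI (Set.Ioi ε) :=
    ((integrable_indicator_iff measurableSet_Ioc).2 hG).integrableOn
  have hpt : ∀ u ∈ Set.Ioi ε, c ^ (-(p - 2)) * (GI u - |Real.cos u| ^ s / u ^ 3) ≤ D u := by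
    intro u hu
    have hu0 : 0 < u := he.trans hu
    have hsplit : u ^ (-(p + 1)) = u ^ (-(p - 2)) * (1 / u ^ 3) := by
      rw [show -(p + 1) = -(p - 2) + (-(3 : ℕ) : ℝ) by push_cast; ring, Real.rpow_add hu0,
        Real.rpow_neg hu0.le ((3 : ℕ) : ℝ), Real.rpow_natCast, one_div]
    have h3 : 0 < 1 / u ^ 3 := by positivity
    have hcc : 0 < c ^ (-(p - 2)) := Real.rpow_pos_of_pos hc0 _
    simp only [hD]
    rw [hsplit]
    rcases le_or_gt u Real.pi with h | h
    · have : GI u = Real.exp (-(u ^ 2) / 2 * s) / u ^ 3 := Set.indicator_of_mem (show u ∈ Set.Ioc ε Real.pi from ⟨hu, h⟩) _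
      rw [this]
      have key : c ^ (-(p - 2)) * (Real.exp (-(u ^ 2) / 2 * s) - |Real.cos u| ^ s) ≤
          u ^ (-(p - 2)) * (Real.exp (-(u ^ 2) / 2 * s) - |Real.cos u| ^ s) := by
        rcases le_total u c with h' | h'
        · refine mul_le_mul_of_nonneg_right ?_ (hDl u hu0 h')
          exact Real.rpow_le_rpow_of_nonpos hu0 h' (by linarith)
        · refine mul_le_mul_of_nonpos_right ?_ (hDr u h' h)
          exact Real.rpow_le_rpow_of_nonpos hc0 h' (by linarith)
      calc _ = c ^ (-(p - 2)) * (Real.exp (-(u ^ 2) / 2 * s) - |Real.cos u| ^ s) * (1 / u ^ 3) := by ring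
        _ ≤ _ := mul_le_mul_of_nonneg_right key h3.le
        _ = _ := by ring
    · have : GI u = 0 := Set.indicator_of_notMem (fun hh => absurd hh.2 (not_le.2 h)) _
      rw [this]
      have h1 : u ^ (-(p - 2)) ≤ c ^ (-(p - 2)) :=
        Real.rpow_le_rpow_of_nonpos hc0 (hcp.trans h.le) (by linarith)
      have h2 : 0 ≤ |Real.cos u| ^ s := by positivity
      have h4 : 0 < u ^ (-(p - 2)) := Real.rpow_pos_of_pos hu0 _
      have h5 := Real.exp_pos (-(u ^ 2) / 2 * s)
      calc _ = -(c ^ (-(p - 2)) * (|Real.cos u| ^ s * (1 / u ^ 3))) := by ring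
        _ ≤ -(u ^ (-(p - 2)) * (|Real.cos u| ^ s * (1 / u ^ 3))) := by gcongr
        _ ≤ Real.exp (-(u ^ 2) / 2 * s) * (u ^ (-(p - 2)) * (1 / u ^ 3)) +
          -(u ^ (-(p - 2)) * (|Real.cos u| ^ s * (1 / u ^ 3))) := le_add_of_nonneg_left (by positivity)
        _ = _ := by ring
  have h1 : ∫ u in Set.Ioi ε, D u ≤ ∫ u in Set.Ioi (0 : ℝ), D u := by
    rw [← Set.Ioc_union_Ioi_eq_Ioi he.le, setIntegral_union Set.Ioc_disjoint_Ioi_same measurableSet_Ioi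
      (hintg.mono_set Set.Ioc_subset_Ioi_self) (hintg.mono_set (Set.Ioi_subset_Ioi he.le))]
    have : 0 ≤ ∫ u in Set.Ioc 0 ε, D u := by
      refine setIntegral_nonneg measurableSet_Ioc fun u hu => ?_
      exact mul_nonneg (hDl u hu.1 (hu.2.trans hεc)) (Real.rpow_nonneg hu.1.le _)
    linarith
  have h2 := setIntegral_mono_on ((hGIi.sub hI).const_mul (c ^ (-(p - 2))))
    (hintg.mono_set (Set.Ioi_subset_Ioi he.le)) measurableSet_Ioi hpt
  refine le_trans ?_ (h2.trans h1)
  simp only [Pi.sub_apply]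
  rw [integral_const_mul, integral_sub hGIi hI, hGI, setIntegral_indicator measurableSet_Ioc,
    Set.inter_eq_self_of_subset_right Set.Ioc_subset_Ioi_self, ← intervalIntegral.integral_of_le (by linarith)]
  have := Real.rpow_nonneg hc0.le (-(p - 2))
  exact mul_nonneg this (by linarith)

end Khin
namespace Khin
open ProbabilityTheory

lemma exp_upper (x : ℝ) (hx : 0 ≤ x) : Real.exp (-x) ≤ 1 - x + x ^ 2 / 2 := by
  have := nonneg_of_deriv (fun x => 1 - x + x ^ 2 / 2 - Real.exp (-x)) (fun x => -1 + x + Real.exp (-x))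
    (fun x => by
      have := (((hasDerivAt_id x).const_sub 1).add ((hasDerivAt_pow 2 x).div_const 2)).sub
        ((hasDerivAt_id x).neg.exp)
      convert! this using 1
      simp) (by simp) (fun x _ => by have := Real.add_one_le_exp (-x); linarith) x hx
  linarith

/-- A measurable function which is `O(u⁴)` near zero and `O(u²)` at infinity is integrable
against `u^(-(p+1))`. -/
lemma integrable_kernel (p : ℝ) (hp : 2 < p) (hp4 : p < 4) (F : ℝ → ℝ) (hF : Measurable F) (c : ℝ)
    (h1 : ∀ u, 0 < u → u ≤ 1 → |F u| ≤ c * u ^ 4) (h2 : ∀ u, 1 < u → |F u| ≤ c * u ^ 2) :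
    IntegrableOn (fun u => F u * u ^ (-(p + 1))) (Set.Ioi 0) := by
  rw [← Set.Ioc_union_Ioi_eq_Ioi zero_le_one]
  have hm : Measurable (fun u : ℝ => F u * u ^ (-(p + 1))) := by fun_prop
  refine IntegrableOn.union ?_ ?_
  · have hi : IntegrableOn (fun u : ℝ => c * u ^ (3 - p)) (Set.Ioc 0 1) := by
      refine Integrable.const_mul ?_ c
      exact (intervalIntegrable_iff_integrableOn_Ioc_of_le zero_le_one).1
        (intervalIntegral.intervalIntegrable_rpow' (by linarith))
    refine Integrable.mono' hi hm.aestronglyMeasurable ?_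
    refine (ae_restrict_iff' measurableSet_Ioc).2 (Filter.Eventually.of_forall fun u hu => ?_)
    have hu0 := hu.1
    rw [norm_mul, Real.norm_eq_abs, Real.norm_eq_abs, abs_of_pos (Real.rpow_pos_of_pos hu0 (-(p + 1)))]
    calc _ ≤ (c * u ^ 4) * u ^ (-(p + 1)) :=
          mul_le_mul_of_nonneg_right (h1 u hu.1 hu.2) (Real.rpow_nonneg hu0.le _)
      _ = c * u ^ (3 - p) := by
        rw [show 3 - p = ((4 : ℕ) : ℝ) + (-(p + 1)) by push_cast; ring, Real.rpow_add hu0,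
          Real.rpow_natCast]; ring
  · have hi : IntegrableOn (fun u : ℝ => c * u ^ (1 - p)) (Set.Ioi 1) := by
      refine Integrable.const_mul ?_ c
      exact integrableOn_Ioi_rpow_of_lt (by linarith) one_pos
    refine Integrable.mono' hi hm.aestronglyMeasurable ?_
    refine (ae_restrict_iff' measurableSet_Ioi).2 (Filter.Eventually.of_forall fun u hu => ?_)
    have hu0 : 0 < u := one_pos.trans hu
    rw [norm_mul, Real.norm_eq_abs, Real.norm_eq_abs, abs_of_pos (Real.rpow_pos_of_pos hu0 (-(p + 1)))]
    calc _ ≤ (c * u ^ 2) * u ^ (-(p + 1)) :=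
          mul_le_mul_of_nonneg_right (h2 u hu) (Real.rpow_nonneg hu0.le _)
      _ = c * u ^ (1 - p) := by
        rw [show 1 - p = ((2 : ℕ) : ℝ) + (-(p + 1)) by push_cast; ring, Real.rpow_add hu0,
          Real.rpow_natCast]; ring

lemma rpow_sub_le (x y s : ℝ) (hx : 0 ≤ x) (hx1 : x ≤ 1) (hy : 0 ≤ y) (hxy : y ≤ x)
    (hs : 1 ≤ s) : x ^ s - y ^ s ≤ s * (x - y) := by
  rcases hx.eq_or_lt with h | h
  · have : y = 0 := le_antisymm (by linarith) hy
    subst h; subst this; simp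
  have hb := one_add_mul_self_le_rpow_one_add (s := y / x - 1)
    (by have : 0 ≤ y / x := by positivity
        linarith) hs
  rw [add_sub_cancel, Real.div_rpow hy hx, le_div_iff₀ (by positivity)] at hb
  have h1 : x ^ s = x ^ (s - 1) * x := by rw [← Real.rpow_add_one h.ne']; ring_nf
  have h2 : x ^ (s - 1) ≤ 1 := Real.rpow_le_one hx hx1 (by linarith)
  have h3 : s * (x - y) * x ^ (s - 1) ≤ s * (x - y) * 1 := by
    have : 0 ≤ x - y := by linarith
    gcongr
  have h4 : (1 + s * (y / x - 1)) * x ^ s = x ^ s - s * (x - y) * x ^ (s - 1) := by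
    rw [h1]; field_simp; ring
  linarith

lemma abs_rpow_sub_le (x y s : ℝ) (hx : 0 ≤ x) (hx1 : x ≤ 1) (hy : 0 ≤ y) (hy1 : y ≤ 1)
    (hs : 1 ≤ s) : |x ^ s - y ^ s| ≤ s * |x - y| := by
  rcases le_total y x with h | h
  · rw [abs_of_nonneg (sub_nonneg.2 (Real.rpow_le_rpow hy h (by linarith))), abs_of_nonneg (sub_nonneg.2 h)]
    exact rpow_sub_le x y s hx hx1 hy h hs
  · rw [abs_sub_comm, abs_sub_comm x,
      abs_of_nonneg (sub_nonneg.2 (Real.rpow_le_rpow hx h (by linarith))), abs_of_nonneg (sub_nonneg.2 h)]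
    exact rpow_sub_le y x s hy hy1 hx h hs

lemma D_integrable (s p : ℝ) (hs : 1 ≤ s) (hp : 2 < p) (hp4 : p < 4) :
    IntegrableOn (fun u : ℝ => (Real.exp (-(u ^ 2) / 2 * s) - |Real.cos u| ^ s) * u ^ (-(p + 1)))
      (Set.Ioi 0) := by
  refine integrable_kernel p hp hp4 (fun u => Real.exp (-(u ^ 2) / 2 * s) - |Real.cos u| ^ s)
    (by fun_prop) s ?_ ?_
  · intro u hu hu1
    have hc0 : 0 ≤ Real.cos u := Real.cos_nonneg_of_mem_Icc
      ⟨by linarith [Real.pi_gt_three], by linarith [Real.pi_gt_three]⟩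
    have he : Real.exp (-(u ^ 2) / 2) ≤ 1 := Real.exp_le_one_iff.2 (by nlinarith)
    have h := abs_rpow_sub_le (Real.exp (-(u ^ 2) / 2)) |Real.cos u| s (Real.exp_pos _).le he
      (abs_nonneg _) (Real.abs_cos_le_one u) hs
    rw [← Real.exp_mul] at h
    refine h.trans ?_
    rw [abs_of_nonneg hc0]
    have : |Real.exp (-(u ^ 2) / 2) - Real.cos u| ≤ u ^ 4 := by
      have e1 := exp_upper (u ^ 2 / 2) (by positivity)
      have e2 := Real.add_one_le_exp (-(u ^ 2) / 2)
      have e3 := tc2 u hu.le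
      have e4 := tc4 u hu.le
      rw [show -(u ^ 2 / 2) = -(u ^ 2) / 2 by ring] at e1
      have : 0 ≤ u ^ 4 := by positivity
      rw [abs_le]; constructor <;> nlinarith
    gcongr
  · intro u hu
    have e1 := Real.exp_pos (-(u ^ 2) / 2 * s)
    have e2 : Real.exp (-(u ^ 2) / 2 * s) ≤ 1 := Real.exp_le_one_iff.2 (by
      have : 0 ≤ u ^ 2 / 2 * s := by positivity
      linarith)
    have e3 : 0 ≤ |Real.cos u| ^ s := by positivity
    have e4 : |Real.cos u| ^ s ≤ 1 := Real.rpow_le_one (abs_nonneg _) (Real.abs_cos_le_one u) (by linarith)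
    have : 1 ≤ s * u ^ 2 := by nlinarith
    rw [abs_le]; constructor <;> linarith

lemma cosk_nonneg (u : ℝ) : 0 ≤ Real.cos u - 1 + u ^ 2 / 2 := by
  have := Real.one_sub_sq_div_two_le_cos (x := u)
  linarith

lemma cosk_integrable (p : ℝ) (hp : 2 < p) (hp4 : p < 4) (x : ℝ) :
    IntegrableOn (fun t : ℝ => (Real.cos (t * x) - 1 + (t * x) ^ 2 / 2) * t ^ (-(p + 1))) (Set.Ioi 0) := by
  refine integrable_kernel p hp hp4 (fun t => Real.cos (t * x) - 1 + (t * x) ^ 2 / 2)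
    (by fun_prop) (x ^ 4 + x ^ 2) ?_ ?_
  · intro u hu hu1
    rw [abs_of_nonneg (cosk_nonneg _)]
    have e4 := tc4 |u * x| (abs_nonneg _)
    rw [Real.cos_abs, sq_abs, show |u * x| ^ 4 = (u * x) ^ 4 by
      rw [show 4 = 2 * 2 by norm_num, pow_mul, sq_abs, ← pow_mul]] at e4
    have : 0 ≤ x ^ 2 * u ^ 4 := by positivity
    have : 0 ≤ x ^ 4 * u ^ 4 := by positivity
    nlinarith
  · intro u hu
    rw [abs_of_nonneg (cosk_nonneg _)]
    have := Real.cos_le_one (u * x)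
    have : 0 ≤ x ^ 4 * u ^ 2 := by positivity
    have : 0 ≤ x ^ 2 * u ^ 2 := by positivity
    nlinarith

/-- The normalising constant. -/
noncomputable def Cp (p : ℝ) : ℝ :=
  ∫ t in Set.Ioi (0 : ℝ), (Real.cos t - 1 + t ^ 2 / 2) * t ^ (-(p + 1))

lemma Cp_pos (p : ℝ) (hp : 2 < p) (hp4 : p < 4) : 0 < Cp p := by
  have hi := cosk_integrable p hp hp4 1
  simp only [mul_one] at hi
  have h0 : ∀ t ∈ Set.Ioi (0 : ℝ), 0 ≤ (Real.cos t - 1 + t ^ 2 / 2) * t ^ (-(p + 1)) :=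
    fun t ht => mul_nonneg (cosk_nonneg t) (Real.rpow_nonneg (le_of_lt ht) _)
  unfold Cp
  rw [setIntegral_pos_iff_support_of_nonneg_ae
    ((ae_restrict_iff' measurableSet_Ioi).2 (Filter.Eventually.of_forall h0)) hi]
  refine lt_of_lt_of_le ?_ (measure_mono (show Set.Ioi (3 : ℝ) ⊆ _ from ?_))
  · simp
  · intro t ht
    have ht3 : 3 < t := ht
    refine ⟨?_, Set.mem_Ioi.2 (by linarith)⟩
    rw [Function.mem_support]
    have := Real.neg_one_le_cos t
    exact (mul_pos (by nlinarith) (Real.rpow_pos_of_pos (by linarith) _)).ne'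

/-- Scaling in the kernel integrals. -/
lemma scale_int (p : ℝ) (F : ℝ → ℝ) (x : ℝ) (hx : 0 < x) :
    ∫ t in Set.Ioi (0 : ℝ), F (x * t) * t ^ (-(p + 1)) =
      x ^ p * ∫ u in Set.Ioi (0 : ℝ), F u * u ^ (-(p + 1)) := by
  have h := integral_comp_mul_left_Ioi (fun u => F u * u ^ (-(p + 1))) 0 hx
  rw [mul_zero, smul_eq_mul] at h
  have e : ∀ t ∈ Set.Ioi (0 : ℝ), F (x * t) * t ^ (-(p + 1)) =
      x ^ (p + 1) * (F (x * t) * (x * t) ^ (-(p + 1))) := by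
    intro t ht
    have ht0 : (0 : ℝ) < t := ht
    rw [Real.mul_rpow hx.le ht0.le, Real.rpow_neg hx.le]
    have : 0 < x ^ (p + 1) := Real.rpow_pos_of_pos hx _
    field_simp
  rw [setIntegral_congr_fun measurableSet_Ioi e, integral_const_mul, h, Real.rpow_add_one hx.ne']
  field_simp

lemma cosk_eval (p : ℝ) (hp : 2 < p) (x : ℝ) :
    ∫ t in Set.Ioi (0 : ℝ), (Real.cos (t * x) - 1 + (t * x) ^ 2 / 2) * t ^ (-(p + 1)) =
      Cp p * |x| ^ p := by
  rcases eq_or_ne x 0 with rfl | hx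
  · simp [Real.zero_rpow (by linarith : p ≠ 0)]
  have h := scale_int p (fun u => Real.cos u - 1 + u ^ 2 / 2) |x| (abs_pos.2 hx)
  rw [Cp, mul_comm, ← h]
  refine setIntegral_congr_fun measurableSet_Ioi fun t ht => ?_
  have ht0 : (0 : ℝ) < t := ht
  have e : |x| * t = |t * x| := by rw [abs_mul, abs_of_pos ht0, mul_comm]
  rw [e, Real.cos_abs, sq_abs]

end Khin
namespace Khin
open ProbabilityTheory

lemma radAvg_cos (n : ℕ) (a : Fin n → ℝ) (t : ℝ) : ∀ c : ℝ,
    radAvg n a (fun x => Real.cos (c + t * x)) = Real.cos c * ∏ i, Real.cos (t * a i) := by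
  induction n with
  | zero => intro c; simp [radAvg_zero]
  | succ n ih =>
    intro c
    rw [radAvg_succ]
    have h : ∀ b : ℝ, (fun x => Real.cos (c + t * (b + x))) =
        fun x => Real.cos ((c + t * b) + t * x) := by
      intro b; funext x; congr 1; ring
    rw [h, h, ih, ih, Fin.prod_univ_succ, mul_neg, ← sub_eq_add_neg, Real.cos_add, Real.cos_sub]
    ring

/-- The Fourier representation of the moment of a signed sum. -/
lemma rad_fourier (p : ℝ) (hp : 2 < p) (hp4 : p < 4) (n : ℕ) (a : Fin n → ℝ)
    (h2 : ∑ i, a i ^ 2 = 1) :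
    IntegrableOn (fun t : ℝ => (∏ i, Real.cos (t * a i) - 1 + t ^ 2 / 2) * t ^ (-(p + 1)))
      (Set.Ioi 0) ∧
    ∫ t in Set.Ioi (0 : ℝ), (∏ i, Real.cos (t * a i) - 1 + t ^ 2 / 2) * t ^ (-(p + 1)) =
      Cp p * radAvg n a (fun x => |x| ^ p) := by
  have e : (fun t : ℝ => (∏ i, Real.cos (t * a i) - 1 + t ^ 2 / 2) * t ^ (-(p + 1))) =
      fun t => (1 / 2 ^ n) * ∑ ε : Fin n → Bool,
        (fun x : ℝ => (Real.cos (t * x) - 1 + (t * x) ^ 2 / 2) * t ^ (-(p + 1)))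
          (∑ i, (if ε i then -1 else 1) * a i) := by
    funext t
    have h1 : (∏ i, Real.cos (t * a i) - 1 + t ^ 2 / 2) * t ^ (-(p + 1)) =
        radAvg n a (fun x => (Real.cos (t * x) - 1 + (t * x) ^ 2 / 2) * t ^ (-(p + 1))) := by
      have hc := radAvg_cos n a t 0
      simp only [zero_add, Real.cos_zero, one_mul] at hc
      have : (fun x : ℝ => (Real.cos (t * x) - 1 + (t * x) ^ 2 / 2) * t ^ (-(p + 1))) =
          fun x => t ^ (-(p + 1)) * (Real.cos (t * x) + (-1 + (t ^ 2 / 2) * x ^ 2)) := by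
        funext x; ring
      rw [this, radAvg_mul, radAvg_add, radAvg_add, radAvg_const, radAvg_mul, radAvg_sq, h2, hc]
      ring
    rw [h1]; rfl
  have hi : ∀ ε : Fin n → Bool, Integrable (fun t : ℝ =>
        (fun x : ℝ => (Real.cos (t * x) - 1 + (t * x) ^ 2 / 2) * t ^ (-(p + 1)))
          (∑ i, (if ε i then -1 else 1) * a i)) (volume.restrict (Set.Ioi 0)) :=
    fun ε => cosk_integrable p hp hp4 _
  constructor
  · rw [e]
    exact (integrable_finsetSum _ fun ε _ => hi ε).const_mul _
  · rw [e, integral_const_mul, integral_finsetSum _ fun ε _ => hi ε]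
    simp only [cosk_eval p hp]
    rw [← Finset.mul_sum, radAvg]
    ring

lemma gauss_cos (t : ℝ) : ∫ y, Real.cos (t * y) ∂(gaussianReal 0 1) = Real.exp (-(t ^ 2) / 2) := by
  have h := charFun_gaussianReal (μ := 0) (v := 1) t
  rw [charFun_apply_real] at h
  have hi : Integrable (fun y : ℝ => Complex.exp (t * y * Complex.I)) (gaussianReal 0 1) := by
    refine Integrable.of_bound (C := 1) (by fun_prop) (Filter.Eventually.of_forall fun y => ?_)
    rw [← Complex.ofReal_mul, Complex.norm_exp_ofReal_mul_I]
  have h2 := congrArg Complex.re h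
  have h3 := integral_re hi
  simp only [RCLike.re_eq_complex_re] at h3
  rw [← h3] at h2
  have e1 : ∀ y : ℝ, (Complex.exp (t * y * Complex.I)).re = Real.cos (t * y) := by
    intro y
    rw [← Complex.ofReal_mul, Complex.exp_ofReal_mul_I_re]
  simp only [e1] at h2
  rw [h2]
  rw [show ((t : ℂ) * ((0 : ℝ) : ℂ) * Complex.I - (((1 : NNReal) : ℝ) : ℂ) * (t : ℂ) ^ 2 / 2) =
    ((-(t ^ 2) / 2 : ℝ) : ℂ) by push_cast; ring, Complex.exp_ofReal_re]

lemma gauss_kernel (p : ℝ) (hp : 2 < p) (hp4 : p < 4) :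
    IntegrableOn (fun t : ℝ => (Real.exp (-(t ^ 2) / 2) - 1 + t ^ 2 / 2) * t ^ (-(p + 1)))
      (Set.Ioi 0) := by
  have h0 : ∀ u : ℝ, 0 ≤ Real.exp (-(u ^ 2) / 2) - 1 + u ^ 2 / 2 := fun u => by
    have := Real.add_one_le_exp (-(u ^ 2) / 2)
    linarith
  refine integrable_kernel p hp hp4 (fun t => Real.exp (-(t ^ 2) / 2) - 1 + t ^ 2 / 2)
    (by fun_prop) 1 ?_ ?_
  · intro u hu hu1
    rw [abs_of_nonneg (h0 u)]
    have e1 := exp_upper (u ^ 2 / 2) (by positivity)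
    rw [show -(u ^ 2 / 2) = -(u ^ 2) / 2 by ring] at e1
    have : 0 ≤ u ^ 4 := by positivity
    nlinarith
  · intro u hu
    rw [abs_of_nonneg (h0 u)]
    have e2 : Real.exp (-(u ^ 2) / 2) ≤ 1 := Real.exp_le_one_iff.2 (by nlinarith)
    nlinarith

/-- The Fourier representation of the Gaussian moment. -/
lemma gauss_fourier (p : ℝ) (hp : 2 < p) (hp4 : p < 4) :
    ∫ t in Set.Ioi (0 : ℝ), (Real.exp (-(t ^ 2) / 2) - 1 + t ^ 2 / 2) * t ^ (-(p + 1)) =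
      Cp p * gam p := by
  let f : ℝ → ℝ → ℝ := fun y t => (Real.cos (t * y) - 1 + (t * y) ^ 2 / 2) * t ^ (-(p + 1))
  have hm : Measurable (Function.uncurry f) := by
    unfold f Function.uncurry; fun_prop
  have hf : Integrable (Function.uncurry f)
      ((gaussianReal 0 1).prod (volume.restrict (Set.Ioi (0 : ℝ)))) := by
    rw [integrable_prod_iff hm.aestronglyMeasurable]
    refine ⟨Filter.Eventually.of_forall fun y => cosk_integrable p hp hp4 y, ?_⟩
    have e : (fun y : ℝ => ∫ t in Set.Ioi (0 : ℝ), ‖Function.uncurry f (y, t)‖) =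
        fun y => Cp p * |y| ^ p := by
      funext y
      rw [← cosk_eval p hp y]
      refine setIntegral_congr_fun measurableSet_Ioi fun t ht => ?_
      exact Real.norm_of_nonneg (mul_nonneg (cosk_nonneg _) (Real.rpow_nonneg (le_of_lt ht) _))
    rw [e]
    have := integrable_gauss 1 p (by linarith) 0
    simp only [zero_add] at this
    exact this.const_mul _
  have hs := integral_integral_swap hf
  have e1 : ∀ y : ℝ, ∫ t in Set.Ioi (0 : ℝ), f y t = Cp p * |y| ^ p := fun y => cosk_eval p hp y
  have hsq : Integrable (fun y : ℝ => y ^ 2) (gaussianReal 0 1) := by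
    have := integrable_gauss 1 2 (by norm_num) 0
    simpa using this
  have e2 : ∀ t : ℝ, ∫ y, f y t ∂(gaussianReal 0 1) =
      (Real.exp (-(t ^ 2) / 2) - 1 + t ^ 2 / 2) * t ^ (-(p + 1)) := by
    intro t
    have hc : Integrable (fun y : ℝ => Real.cos (t * y)) (gaussianReal 0 1) :=
      Integrable.of_bound (C := 1) (by fun_prop)
        (Filter.Eventually.of_forall fun y => Real.abs_cos_le_one _)
    have hc1 : Integrable (fun y : ℝ => Real.cos (t * y) - 1) (gaussianReal 0 1) :=
      hc.sub (integrable_const _)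
    have hr : (fun y => f y t) = fun y =>
        ((Real.cos (t * y) - 1) + t ^ 2 / 2 * y ^ 2) * t ^ (-(p + 1)) := by
      funext y; simp only [f]; ring
    rw [hr, integral_mul_const, integral_add hc1 (hsq.const_mul _),
      integral_sub hc (integrable_const _), integral_const_mul, gauss_second, gauss_cos]
    simp
  simp only [e1, e2] at hs
  rw [← hs, integral_const_mul, gauss_moment p (by linarith)]

lemma term_int (p : ℝ) (hp : 2 < p) (hp4 : p < 4) (b : ℝ) (hb : b ^ 2 ≤ 25 / 36) :
    IntegrableOn (fun t : ℝ => b ^ 2 * ((Real.exp (-(t ^ 2) / 2) -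
      |Real.cos (t * b)| ^ (1 / b ^ 2)) * t ^ (-(p + 1)))) (Set.Ioi 0) ∧
    0 ≤ ∫ t in Set.Ioi (0 : ℝ), b ^ 2 * ((Real.exp (-(t ^ 2) / 2) -
      |Real.cos (t * b)| ^ (1 / b ^ 2)) * t ^ (-(p + 1))) := by
  rcases eq_or_ne b 0 with rfl | hb0
  · simp
  have hb1 : 0 < b ^ 2 := by positivity
  have hs : 36 / 25 ≤ 1 / b ^ 2 := by
    rw [le_div_iff₀ hb1]; linarith
  have hx : 0 < |b| := abs_pos.2 hb0
  let s := 1 / b ^ 2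
  let F : ℝ → ℝ := fun u => Real.exp (-(u ^ 2) / 2 * s) - |Real.cos u| ^ s
  have hD := D_integrable s p (by linarith [hs]) hp hp4
  have hQ := Q_nonneg s p hs hp.le hD
  have hsc := scale_int p F |b| hx
  have e : ∀ t ∈ Set.Ioi (0 : ℝ), F (|b| * t) * t ^ (-(p + 1)) =
      (Real.exp (-(t ^ 2) / 2) - |Real.cos (t * b)| ^ (1 / b ^ 2)) * t ^ (-(p + 1)) := by
    intro t ht
    have ht0 : (0 : ℝ) < t := ht
    have e' : |b| * t = |t * b| := by rw [abs_mul, abs_of_pos ht0, mul_comm]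
    simp only [F, s]
    rw [e', Real.cos_abs, sq_abs, show -((t * b) ^ 2) / 2 * (1 / b ^ 2) = -(t ^ 2) / 2 by
      field_simp]
  constructor
  · refine Integrable.const_mul ?_ _
    have h1 : IntegrableOn (fun u => F u * u ^ (-(p + 1))) (Set.Ioi (|b| * 0)) := by
      rw [mul_zero]; exact hD
    have h2 := ((integrableOn_Ioi_comp_mul_left_iff (fun u => F u * u ^ (-(p + 1))) 0 hx).2 h1).const_mul (|b| ^ (p + 1))
    refine IntegrableOn.congr_fun h2 (fun t ht => ?_) measurableSet_Ioi
    have ht0 : (0 : ℝ) < t := ht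
    refine Eq.trans ?_ (e t ht)
    have : 0 < |b| ^ (p + 1) := Real.rpow_pos_of_pos hx _
    rw [Real.mul_rpow hx.le ht0.le, Real.rpow_neg hx.le]
    field_simp
  · rw [integral_const_mul]
    refine mul_nonneg hb1.le ?_
    rw [← setIntegral_congr_fun measurableSet_Ioi e, hsc]
    exact mul_nonneg (Real.rpow_nonneg hx.le _) hQ

lemma khin_caseB (p : ℝ) (hp : 2 < p) (hp4 : p < 4) (n : ℕ) (a : Fin n → ℝ)
    (h2 : ∑ i, a i ^ 2 = 1) (h4 : ∀ i, a i ^ 2 ≤ 25 / 36) :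
    radAvg n a (fun x => |x| ^ p) ≤ gam p := by
  obtain ⟨hRi, hR⟩ := rad_fourier p hp hp4 n a h2
  have hGi := gauss_kernel p hp hp4
  have hG := gauss_fourier p hp hp4
  have hT := fun i => term_int p hp hp4 (a i) (h4 i)
  have hsum : 0 ≤ ∫ t in Set.Ioi (0 : ℝ), ∑ i, a i ^ 2 * ((Real.exp (-(t ^ 2) / 2) -
      |Real.cos (t * a i)| ^ (1 / a i ^ 2)) * t ^ (-(p + 1))) := by
    rw [integral_finsetSum _ fun i _ => (hT i).1]
    exact Finset.sum_nonneg fun i _ => (hT i).2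
  have hle : ∫ t in Set.Ioi (0 : ℝ), ∑ i, a i ^ 2 * ((Real.exp (-(t ^ 2) / 2) -
      |Real.cos (t * a i)| ^ (1 / a i ^ 2)) * t ^ (-(p + 1))) ≤
      ∫ t in Set.Ioi (0 : ℝ), ((Real.exp (-(t ^ 2) / 2) - 1 + t ^ 2 / 2) * t ^ (-(p + 1)) -
        (∏ i, Real.cos (t * a i) - 1 + t ^ 2 / 2) * t ^ (-(p + 1))) := by
    refine setIntegral_mono_on (integrable_finsetSum _ fun i _ => (hT i).1) (hGi.sub hRi)
      measurableSet_Ioi fun t ht => ?_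
    have hK : 0 ≤ t ^ (-(p + 1)) := Real.rpow_nonneg (le_of_lt ht) _
    have ham := Real.geom_mean_le_arith_mean_weighted Finset.univ (fun i => a i ^ 2)
      (fun i => |Real.cos (t * a i)| ^ (1 / a i ^ 2)) (fun i _ => by positivity) h2
      (fun i _ => by positivity)
    have hprod : ∏ i, (|Real.cos (t * a i)| ^ (1 / a i ^ 2)) ^ (a i ^ 2) =
        |∏ i, Real.cos (t * a i)| := by
      rw [Finset.abs_prod]
      refine Finset.prod_congr rfl fun i _ => ?_
      rcases eq_or_ne (a i) 0 with h | h
      · simp [h]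
      · rw [← Real.rpow_mul (abs_nonneg _), one_div_mul_cancel (by positivity), Real.rpow_one]
    rw [hprod] at ham
    have h5 := (le_abs_self _).trans ham
    have h6 : ∑ i, a i ^ 2 * ((Real.exp (-(t ^ 2) / 2) -
        |Real.cos (t * a i)| ^ (1 / a i ^ 2)) * t ^ (-(p + 1))) =
        (Real.exp (-(t ^ 2) / 2) - ∑ i, a i ^ 2 * |Real.cos (t * a i)| ^ (1 / a i ^ 2)) *
          t ^ (-(p + 1)) := by
      have h7 : Real.exp (-(t ^ 2) / 2) = ∑ i, a i ^ 2 * Real.exp (-(t ^ 2) / 2) := by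
        rw [← Finset.sum_mul, h2, one_mul]
      conv_rhs => rw [h7, ← Finset.sum_sub_distrib, Finset.sum_mul]
      refine Finset.sum_congr rfl fun i _ => ?_
      ring
    rw [h6, ← sub_mul]
    refine mul_le_mul_of_nonneg_right ?_ hK
    linarith
  rw [integral_sub hGi hRi, hG, hR, ← mul_sub] at hle
  have := nonneg_of_mul_nonneg_right (hsum.trans hle) (Cp_pos p hp hp4)
  linarith

lemma khin_unit (p : ℝ) (hp : 2 < p) (hp4 : p < 4) (n : ℕ) (a : Fin n → ℝ)
    (h2 : ∑ i, a i ^ 2 = 1) : radAvg n a (fun x => |x| ^ p) ≤ gam p := by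
  by_cases h4 : (25 / 36 : ℝ) ^ 2 ≤ ∑ i, a i ^ 4
  · exact khin_caseA p hp hp4.le n a h2 h4
  · refine khin_caseB p hp hp4 n a h2 fun i => ?_
    push Not at h4
    have h := Finset.single_le_sum (f := fun i => a i ^ 4) (fun j _ => by positivity)
      (Finset.mem_univ i)
    have h' : (a i ^ 2) ^ 2 ≤ (25 / 36 : ℝ) ^ 2 := by
      rw [← pow_mul]; exact h.trans h4.le
    exact (pow_le_pow_iff_left₀ (by positivity) (by norm_num) two_ne_zero).1 h'

lemma khin_gt2 (p : ℝ) (hp : 2 < p) (n : ℕ) (a : Fin n → ℝ) :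
    radAvg n a (fun x => |x| ^ p) ≤ gam p * (∑ i, a i ^ 2) ^ (p / 2) := by
  rcases le_or_gt 3 p with h3 | h3
  · exact khin_ge3 p h3 n a
  have hs0 : 0 ≤ ∑ i, a i ^ 2 := Finset.sum_nonneg fun i _ => by positivity
  rcases hs0.eq_or_lt with h0 | h0
  · have ha : a = fun i => 0 * a i := by
      funext i
      have := (Finset.sum_eq_zero_iff_of_nonneg (fun i _ => by positivity)).1 h0.symm i
        (Finset.mem_univ i)
      simpa using this
    rw [← h0, ha, radAvg_scale, Real.zero_rpow (by linarith)]
    simp [radAvg_const, Real.zero_rpow (by linarith : p ≠ 0)]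
  · set σ := Real.sqrt (∑ i, a i ^ 2) with hσ
    have hσ0 : 0 < σ := Real.sqrt_pos.2 h0
    have hσ2 : σ ^ 2 = ∑ i, a i ^ 2 := Real.sq_sqrt hs0
    have hu := khin_unit p hp (by linarith) n (fun i => σ⁻¹ * a i) (by
      simp only [mul_pow]
      rw [← Finset.mul_sum, ← hσ2]; field_simp)
    rw [radAvg_scale] at hu
    simp only [abs_mul, Real.mul_rpow (abs_nonneg _) (abs_nonneg _)] at hu
    rw [radAvg_mul, abs_of_pos (inv_pos.2 hσ0), Real.inv_rpow hσ0.le] at hu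
    have hpos : 0 < σ ^ p := Real.rpow_pos_of_pos hσ0 _
    rw [← hσ2, ← Real.rpow_natCast, ← Real.rpow_mul hσ0.le,
      show ((2 : ℕ) : ℝ) * (p / 2) = p by push_cast; ring]
    rw [inv_mul_le_iff₀ hpos] at hu
    linarith

end Khin
namespace Khin

section red
variable {X : Type*} [MeasurableSpace X] (μ : Measure X) [IsProbabilityMeasure μ]

lemma integral_comp_eval {n : ℕ} (i : Fin n) (g : X → ℝ) (hg : Measurable g) :
    ∫ x : Fin n → X, g (x i) ∂(Measure.pi fun _ => μ) = ∫ y, g y ∂μ := by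
  have h := measurePreserving_eval (fun _ : Fin n => μ) i
  have h2 := integral_map (μ := Measure.pi fun _ : Fin n => μ) (f := g)
    h.measurable.aemeasurable hg.aestronglyMeasurable
  rw [h.map_eq] at h2
  exact h2.symm

lemma symm_integral (neg : X → X) (hneg_mp : MeasurePreserving neg μ μ)
    (f : X → ℝ) (hf : Measurable f) (hodd : ∀ x, f (neg x) = -f x) (hb : ∀ x, |f x| ≤ 1)
    (n : ℕ) (v : Fin n → ℝ) (φ : ℝ → ℝ) (hφ : Continuous φ) :
    ∫ x : Fin n → X, φ (∑ i, f (x i) * v i) ∂(Measure.pi fun _ => μ) =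
      ∫ x : Fin n → X, radAvg n (fun i => f (x i) * v i) φ ∂(Measure.pi fun _ => μ) := by
  have hmeas : ∀ ε : Fin n → Bool, Measurable
      (fun x : Fin n → X => ∑ i, (if ε i then (-1 : ℝ) else 1) * (f (x i) * v i)) := by
    intro ε
    refine Finset.measurable_sum _ fun i _ => ?_
    exact ((hf.comp (measurable_pi_apply i)).mul_const _).const_mul _
  have hintg : ∀ ε : Fin n → Bool, Integrable
      (fun x : Fin n → X => φ (∑ i, (if ε i then (-1 : ℝ) else 1) * (f (x i) * v i)))
      (Measure.pi fun _ => μ) := by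
    intro ε
    have hc : IsCompact (Set.Icc (-∑ i, |v i|) (∑ i, |v i|)) := isCompact_Icc
    obtain ⟨C, hC⟩ := hc.exists_bound_of_continuousOn hφ.continuousOn
    refine Integrable.of_bound (hφ.measurable.comp (hmeas ε)).aestronglyMeasurable C ?_
    refine Filter.Eventually.of_forall fun x => hC _ ?_
    rw [Set.mem_Icc, ← abs_le]
    refine (Finset.abs_sum_le_sum_abs _ _).trans (Finset.sum_le_sum fun i _ => ?_)
    rw [abs_mul, abs_mul]
    have : |(if ε i then (-1 : ℝ) else 1)| = 1 := by split_ifs <;> simp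
    rw [this]
    nlinarith [hb (x i), abs_nonneg (v i)]
  have hε : ∀ ε : Fin n → Bool,
      ∫ x : Fin n → X, φ (∑ i, (if ε i then (-1 : ℝ) else 1) * (f (x i) * v i))
        ∂(Measure.pi fun _ => μ) =
      ∫ x : Fin n → X, φ (∑ i, f (x i) * v i) ∂(Measure.pi fun _ => μ) := by
    intro ε
    have hmp : MeasurePreserving (fun (x : Fin n → X) i => (if ε i then neg else id) (x i))
        (Measure.pi fun _ => μ) (Measure.pi fun _ => μ) := by
      refine measurePreserving_pi (fun _ => μ) (fun _ => μ)
        (f := fun i => (if ε i then neg else id)) fun i => ?_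
      split_ifs
      · exact hneg_mp
      · exact MeasurePreserving.id μ
    have hm1 : Measurable (fun x : Fin n → X => φ (∑ i, f (x i) * v i)) := by
      refine hφ.measurable.comp (Finset.measurable_sum _ fun i _ => ?_)
      exact ((hf.comp (measurable_pi_apply i)).mul_const _)
    conv_rhs => rw [← hmp.map_eq]
    rw [integral_map hmp.measurable.aemeasurable hm1.aestronglyMeasurable]
    congr 1
    funext x
    congr 1
    refine Finset.sum_congr rfl fun i _ => ?_
    by_cases hεi : ε i = true
    · beta_reduce; rw [if_pos hεi, if_pos hεi, hodd]; ring
    · beta_reduce; rw [if_neg hεi, if_neg hεi, id]; ring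
  unfold radAvg
  rw [integral_const_mul, integral_finsetSum _ (fun ε _ => hintg ε)]
  simp_rw [hε]
  simp

theorem main_red
    (KH : ∀ (p : ℝ), 2 < p → ∀ (n : ℕ) (a : Fin n → ℝ),
      radAvg n a (fun x => |x| ^ p) ≤ gam p * (∑ i, a i ^ 2) ^ (p / 2))
    (neg : X → X) (hneg_inv : Function.Involutive neg) (hneg_mp : MeasurePreserving neg μ μ)
    (S : Set X) (hS : MeasurableSet S) (hdisj : S ∩ neg ⁻¹' S = ∅)
    (n : ℕ) (v : Fin n → ℝ) (p : ℝ) (hp : 1 ≤ p) :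
    (∫ x : Fin n → X,
        |∑ i, (Set.indicator S (fun _ => (1 : ℝ)) (x i) -
            Set.indicator (neg ⁻¹' S) (fun _ => (1 : ℝ)) (x i)) * v i| ^ p
        ∂(Measure.pi fun _ => μ)) ^ (1 / p) ≤
      (max (max 1 (2 ^ ((1 : ℝ) / 2 - 1 / p)))
          (2 ^ ((1 : ℝ) / 2) * (Real.Gamma ((p + 1) / 2) / Real.sqrt Real.pi) ^ (1 / p))) *
        max ((2 * (μ S).toReal) ^ ((1 : ℝ) / p)) ((2 * (μ S).toReal) ^ ((1 : ℝ) / 2)) *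
        (∑ i, v i ^ 2) ^ ((1 : ℝ) / 2) := by
  have hS' : MeasurableSet (neg ⁻¹' S) := hneg_mp.measurable hS
  set f : X → ℝ := fun x => Set.indicator S (fun _ => (1 : ℝ)) x -
            Set.indicator (neg ⁻¹' S) (fun _ => (1 : ℝ)) x with hfdef
  have hf : Measurable f :=
    (measurable_const.indicator hS).sub (measurable_const.indicator hS')
  have hodd : ∀ x, f (neg x) = - f x := by
    intro x
    have h1 : (neg x ∈ neg ⁻¹' S) = (x ∈ S) := by rw [Set.mem_preimage, hneg_inv x]
    have h2 : (x ∈ neg ⁻¹' S) = (neg x ∈ S) := rfl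
    have h3 : Set.indicator (neg ⁻¹' S) (fun _ => (1 : ℝ)) (neg x) =
        Set.indicator S (fun _ => (1 : ℝ)) x := by
      by_cases h : x ∈ S
      · rw [Set.indicator_of_mem h, Set.indicator_of_mem (h1 ▸ h)]
      · rw [Set.indicator_of_notMem h, Set.indicator_of_notMem (h1 ▸ h)]
    have h4 : Set.indicator (neg ⁻¹' S) (fun _ => (1 : ℝ)) x =
        Set.indicator S (fun _ => (1 : ℝ)) (neg x) := rfl
    simp only [hfdef, h3, h4]
    ring
  have hsq : ∀ x, f x ^ 2 = Set.indicator S (fun _ => (1 : ℝ)) x +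
            Set.indicator (neg ⁻¹' S) (fun _ => (1 : ℝ)) x := by
    intro x
    have hx : ¬ (x ∈ S ∧ x ∈ neg ⁻¹' S) := by
      intro h
      have : x ∈ S ∩ neg ⁻¹' S := h
      simp [hdisj] at this
    by_cases h1 : x ∈ S <;> by_cases h2 : x ∈ neg ⁻¹' S <;> simp_all
  have hb : ∀ x, |f x| ≤ 1 := by
    intro x
    rw [← sq_le_one_iff_abs_le_one, hsq]
    have hx : ¬ (x ∈ S ∧ x ∈ neg ⁻¹' S) := by
      intro h
      have : x ∈ S ∩ neg ⁻¹' S := h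
      simp [hdisj] at this
    by_cases h1 : x ∈ S <;> by_cases h2 : x ∈ neg ⁻¹' S <;> simp_all
  have hb2 : ∀ x, f x ^ 2 ≤ 1 := fun x => (sq_le_one_iff_abs_le_one _).2 (hb x)
  set t : ℝ := (μ S).toReal with ht
  have ht0 : 0 ≤ t := ENNReal.toReal_nonneg
  have hfint : ∫ y, f y ^ 2 ∂μ = 2 * t := by
    simp_rw [hsq]
    rw [integral_add ((integrable_const _).indicator hS) ((integrable_const _).indicator hS'),
      integral_indicator hS, integral_indicator hS']
    simp only [integral_const, smul_eq_mul, mul_one, Measure.real, Measure.restrict_apply_univ]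
    rw [hneg_mp.measure_preimage hS.nullMeasurableSet]
    ring
  set V : ℝ := ∑ i, v i ^ 2 with hV
  have hV0 : 0 ≤ V := Finset.sum_nonneg fun i _ => sq_nonneg _
  set P : Measure (Fin n → X) := Measure.pi fun _ => μ with hP
  have hmf2 : ∀ i : Fin n, Measurable (fun x : Fin n → X => f (x i) ^ 2 * v i ^ 2) := fun i =>
    ((hf.comp (measurable_pi_apply i)).pow_const 2).mul_const _
  have hif2 : ∀ i : Fin n, Integrable (fun x : Fin n → X => f (x i) ^ 2 * v i ^ 2) P := by
    intro i
    refine Integrable.of_bound (hmf2 i).aestronglyMeasurable (v i ^ 2) ?_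
    refine Filter.Eventually.of_forall fun x => ?_
    rw [Real.norm_of_nonneg (by positivity)]
    nlinarith [hb2 (x i), sq_nonneg (v i)]
  have hYint : ∫ x : Fin n → X, ∑ i, f (x i) ^ 2 * v i ^ 2 ∂P = 2 * t * V := by
    rw [integral_finsetSum _ (fun i _ => hif2 i)]
    have : ∀ i : Fin n, ∫ x : Fin n → X, f (x i) ^ 2 * v i ^ 2 ∂P = 2 * t * v i ^ 2 := by
      intro i
      rw [integral_mul_const, integral_comp_eval μ i (fun y => f y ^ 2) (hf.pow_const 2), hfint]
    simp_rw [this]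
    rw [← Finset.mul_sum]
  have hYV : ∀ x : Fin n → X, ∑ i, f (x i) ^ 2 * v i ^ 2 ≤ V := by
    intro x
    refine Finset.sum_le_sum fun i _ => ?_
    nlinarith [hb2 (x i), sq_nonneg (v i)]
  have hp0 : 0 < p := by linarith
  change (∫ x : Fin n → X, |∑ i, f (x i) * v i| ^ p ∂P) ^ (1 / p) ≤ _
  have hJ0 : 0 ≤ ∫ x : Fin n → X, |∑ i, f (x i) * v i| ^ p ∂P :=
    integral_nonneg fun x => by positivity
  have hmF : Measurable (fun x : Fin n → X => ∑ i, f (x i) * v i) :=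
    Finset.measurable_sum _ fun i _ => ((hf.comp (measurable_pi_apply i)).mul_const _)
  have hFb : ∀ x : Fin n → X, |∑ i, f (x i) * v i| ≤ ∑ i, |v i| := by
    intro x
    refine (Finset.abs_sum_le_sum_abs _ _).trans (Finset.sum_le_sum fun i _ => ?_)
    rw [abs_mul]
    nlinarith [hb (x i), abs_nonneg (v i)]
  rcases le_or_gt p 2 with hp2 | hp2
  · -- Jensen
    have h2 : ∫ x : Fin n → X, (∑ i, f (x i) * v i) ^ 2 ∂P = 2 * t * V := by
      rw [symm_integral μ neg hneg_mp f hf hodd hb n v (fun x => x ^ 2) (by fun_prop)]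
      simp_rw [radAvg_sq, mul_pow]
      exact hYint
    have hJ : ∫ x : Fin n → X, |∑ i, f (x i) * v i| ^ p ∂P ≤ (2 * t * V) ^ (p / 2) := by
      have hcc := Real.concaveOn_rpow (p := p / 2) (by linarith) (by linarith)
      have := hcc.le_map_integral (μ := P) (f := fun x : Fin n → X => (∑ i, f (x i) * v i) ^ 2)
        (Real.continuous_rpow_const (by linarith)).continuousOn isClosed_Ici
        (Filter.Eventually.of_forall fun x => Set.mem_Ici.2 (sq_nonneg _)) ?_ ?_
      · rw [h2] at this
        refine le_trans (le_of_eq ?_) this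
        congr 1
        funext x
        rw [← sq_abs, ← Real.rpow_natCast, ← Real.rpow_mul (abs_nonneg _)]
        congr 1
        push_cast; ring
      · refine Integrable.of_bound (hmF.pow_const 2).aestronglyMeasurable ((∑ i, |v i|) ^ 2) ?_
        refine Filter.Eventually.of_forall fun x => ?_
        rw [Real.norm_of_nonneg (sq_nonneg _), ← sq_abs]
        gcongr
        exact hFb x
      · refine Integrable.of_bound ((Real.continuous_rpow_const (by linarith)).measurable.comp
          (hmF.pow_const 2)).aestronglyMeasurable (((∑ i, |v i|) ^ 2) ^ (p / 2)) ?_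
        refine Filter.Eventually.of_forall fun x => ?_
        simp only [Function.comp]
        rw [Real.norm_of_nonneg (by positivity), ← sq_abs]
        gcongr
        exact hFb x
    have h3 : (∫ x : Fin n → X, |∑ i, f (x i) * v i| ^ p ∂P) ^ (1 / p) ≤
        (2 * t) ^ ((1 : ℝ) / 2) * V ^ ((1 : ℝ) / 2) := by
      calc _ ≤ ((2 * t * V) ^ (p / 2)) ^ (1 / p) := by gcongr
        _ = _ := by
          rw [← Real.rpow_mul (by positivity), ← Real.mul_rpow (by positivity) hV0]
          congr 1; field_simp
    refine h3.trans ?_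
    gcongr
    calc (2 * t) ^ ((1 : ℝ) / 2) = 1 * (2 * t) ^ ((1 : ℝ) / 2) := (one_mul _).symm
      _ ≤ _ := by
        gcongr
        · exact le_max_of_le_left (le_max_left _ _)
        · exact le_max_right _ _
  · have hG0 : 0 < Real.Gamma ((p + 1) / 2) := Real.Gamma_pos_of_pos (by linarith)
    have hgam0 : 0 ≤ gam p := by unfold gam; positivity
    have hJ : ∫ x : Fin n → X, |∑ i, f (x i) * v i| ^ p ∂P ≤ gam p * (2 * t) * V ^ (p / 2) := by
      have hs := symm_integral μ neg hneg_mp f hf hodd hb n v (fun x => |x| ^ p)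
        (by
          refine Continuous.rpow_const continuous_abs fun x => Or.inr hp0.le)
      simp only at hs
      rw [hs]
      calc _ ≤ ∫ x : Fin n → X, gam p * V ^ (p / 2 - 1) * ∑ i, f (x i) ^ 2 * v i ^ 2 ∂P := by
            refine integral_mono_of_nonneg (Filter.Eventually.of_forall fun x => ?_)
              ((integrable_finsetSum _ fun i _ => hif2 i).const_mul _)
              (Filter.Eventually.of_forall fun x => ?_)
            · simp only [Pi.zero_apply, radAvg]
              positivity
            · simp only
              refine (KH p hp2 n _).trans ?_
              rw [mul_assoc]
              gcongr
              simp_rw [mul_pow]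
              have hY0 : 0 ≤ ∑ i, f (x i) ^ 2 * v i ^ 2 := Finset.sum_nonneg fun i _ => by positivity
              set Y := ∑ i, f (x i) ^ 2 * v i ^ 2
              rcases hY0.eq_or_lt with h | h
              · rw [← h, Real.zero_rpow (by linarith)]; simp
              · calc Y ^ (p / 2) = Y ^ (p / 2 - 1) * Y := by
                      rw [← Real.rpow_add_one h.ne']; congr 1; ring
                  _ ≤ _ := by
                      gcongr
                      · linarith
                      · exact hYV x
        _ = gam p * (2 * t) * V ^ (p / 2) := by
            rw [integral_const_mul, hYint]
            rcases hV0.eq_or_lt with h | h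
            · rw [← h, Real.zero_rpow (by linarith : p / 2 ≠ 0)]; simp
            · rw [show p / 2 = (p / 2 - 1) + 1 by ring, Real.rpow_add_one h.ne']
              ring_nf
    calc _ ≤ (gam p * (2 * t) * V ^ (p / 2)) ^ (1 / p) := by gcongr
      _ = (2 ^ ((1 : ℝ) / 2) * (Real.Gamma ((p + 1) / 2) / Real.sqrt Real.pi) ^ (1 / p)) *
          (2 * t) ^ (1 / p) * V ^ ((1 : ℝ) / 2) := by
          unfold gam
          rw [Real.mul_rpow (by positivity) (by positivity),
            Real.mul_rpow (by positivity) (by positivity),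
            Real.mul_rpow (by positivity) (by positivity), ← Real.rpow_mul hV0,
            ← Real.rpow_mul (by norm_num)]
          rw [show p / 2 * (1 / p) = (1 : ℝ) / 2 by field_simp]
      _ ≤ _ := by
        gcongr
        · exact le_max_right _ _
        · exact le_max_left _ _

end red
end Khin

theorem stmt16 {X : Type*} [MeasurableSpace X] (μ : Measure X) [IsProbabilityMeasure μ]
    (neg : X → X) (hneg_inv : Function.Involutive neg) (hneg_mp : MeasurePreserving neg μ μ)
    (S : Set X) (hS : MeasurableSet S) (hdisj : S ∩ neg ⁻¹' S = ∅)
    (n : ℕ) (v : Fin n → ℝ) (p : ℝ) (hp : 1 ≤ p) :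
    (∫ x : Fin n → X,
        |∑ i, (Set.indicator S (fun _ => (1 : ℝ)) (x i) -
            Set.indicator (neg ⁻¹' S) (fun _ => (1 : ℝ)) (x i)) * v i| ^ p
        ∂(Measure.pi fun _ => μ)) ^ (1 / p) ≤
      (max (max 1 (2 ^ ((1 : ℝ) / 2 - 1 / p)))
          (2 ^ ((1 : ℝ) / 2) * (Real.Gamma ((p + 1) / 2) / Real.sqrt Real.pi) ^ (1 / p))) *
        max ((2 * (μ S).toReal) ^ ((1 : ℝ) / p)) ((2 * (μ S).toReal) ^ ((1 : ℝ) / 2)) *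
        (∑ i, v i ^ 2) ^ ((1 : ℝ) / 2) := by
  exact Khin.main_red μ Khin.khin_gt2 neg hneg_inv hneg_mp S hS hdisj n v p hp
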